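/- Fix θ ∈ [1/4, 1). There is a constant C > 0 depending only on θ with the following property. Let Y be as in the context, satisfying the well-stretched condition with constant λ > 0 and ‖Y‖_{Ḣ^{2+θ}(𝕋)} < ∞, and let g_Y be as in the context. Then ‖g_Y‖_{Ḣ²(𝕋)} ≤ C λ^{−3} ‖Y‖_{Ḣ^{9/4}(𝕋)}⁴. -/

import Mathlib

open MeasureTheory Real Filter Topology
open scoped RealInnerProductSpace ENNReal

noncomputable section

abbrev E2 : Type := EuclideanSpace ℝ (Fin 2)

/-- Squared modulus of the `k`-th Fourier coefficient
`ĝ_k = ∫_{-π}^{π} g(s) e^{-iks} ds` (componentwise complexified). -/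
def coefSq (g : ℝ → E2) (k : ℤ) : ℝ :=
  ∑ j : Fin 2,
    Complex.normSq (∫ s in (-π)..π, (g s j : ℂ) * Complex.exp (-Complex.I * (k : ℂ) * (s : ℂ)))

/-- Summand of the homogeneous Sobolev seminorm: `|k|^{2σ} |ĝ_k|²` for `k ≠ 0`. -/
def sobSummand (σ : ℝ) (g : ℝ → E2) (k : ℤ) : ℝ :=
  if k = 0 then 0 else (|k| : ℝ) ^ (2 * σ) * coefSq g k

/-- The homogeneous Sobolev seminorm `‖g‖_{Ḣ^σ(𝕋)} = (Σ_{k≠0} |k|^{2σ} |ĝ_k|²)^{1/2}`. -/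
def sobNorm (σ : ℝ) (g : ℝ → E2) : ℝ := Real.sqrt (∑' k : ℤ, sobSummand σ g k)

/-- The `L²(𝕋)` norm (vector-valued). -/
def normL2v (g : ℝ → E2) : ℝ := Real.sqrt (∫ s in (-π)..π, ‖g s‖ ^ 2)

/-- The nonlinear remainder `g_Y` in the contour dynamic equation (Hookean case):
`g_Y(s) = (1/4π) ∫_{−π}^{π} [ (−|Y'(s+τ)|²/|L|² + 2(L·Y'(s+τ))²/|L|⁴ − 1) L/τ
+ (1/τ − τ/(4 sin²(τ/2))) L ] dτ` with `L = (Y(s+τ) − Y(s))/τ`. -/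
def gY (Y Y' : ℝ → E2) (s : ℝ) : E2 :=
  ((4 * π)⁻¹ : ℝ) • ∫ τ in (-π)..π,
    (((-‖Y' (s + τ)‖ ^ 2 / ‖τ⁻¹ • (Y (s + τ) - Y s)‖ ^ 2
          + 2 * (⟪τ⁻¹ • (Y (s + τ) - Y s), Y' (s + τ)⟫) ^ 2 /
              ‖τ⁻¹ • (Y (s + τ) - Y s)‖ ^ 4
          - 1) / τ
        + (1 / τ - τ / (4 * Real.sin (τ / 2) ^ 2))) • (τ⁻¹ • (Y (s + τ) - Y s)))

/-!
Identify the plane with `ℂ`; then `−|v|²/|l|² + 2(l·v)²/|l|⁴ = Re ((v/l)²)`. Writing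
`l = ∫₀¹ Y'(s + uτ) du` and `p = ∫₀¹ u Y''(s + uτ) du`, so that `Y'(s + τ) = l + τ p`, the singular
part of the integrand becomes `F = p + p̄ l/l̄ + τ/2 (p²/l + p̄² l/l̄²)`, which no longer has a
singularity at `τ = 0`. Moreover `∂ₛF = ∂_τA + R` with `R` bilinear in `Y''` and
`m = ∫₀¹ (1 − u) Y''(s + uτ) du`, and `∂ₛR − ∂_τR = Q`, where the worst term of `Q` is of size
`|Y''(s + τ)| |Y''(s) − 2m| / |τ|`. Hence the second derivative in `s` of `∫ F dτ` is `∫ Q dτ` up to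
boundary terms, which add up to a multiple of `Y''(s)`.

By Cauchy–Schwarz in `τ`, the weight `|τ|^{-1/2}` goes to `Y''(s + τ)` and is absorbed by the
critical fractional Hardy inequality for `H^{1/4}`, while the weight `|τ|^{-3/2}` goes to
`Y''(s) − 2m` and gives the `H^{1/4}` Gagliardo seminorm. The remaining kernel
`1/τ² − 1/(4 sin² (τ/2))` is bounded, so it contributes a bounded Fourier multiplier; the terms
linear in `Y` obey the quartic bound because `λ` is at most a multiple of `‖Y‖_{Ḣ^{9/4}}`.

This is done for trigonometric polynomials, and one passes to the limit along the partial Fourier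
sums of `Y`, which are eventually well-stretched with constant `λ/2` because the Fourier
coefficients of `Y'` are absolutely summable.
-/
section TrigonometricPolynomials

open scoped ComplexConjugate

/-- The character `s ↦ e^{iks}` of the circle `ℝ/2πℤ`. -/
def expMode (k : ℤ) (s : ℝ) : ℂ := Complex.exp (Complex.I * (k : ℂ) * (s : ℂ))

lemma hasDerivAt_expMode (k : ℤ) (s : ℝ) :
    HasDerivAt (expMode k) (Complex.I * k * expMode k s) s := by
  have h : HasDerivAt (fun s : ℝ => Complex.I * (k : ℂ) * (s : ℂ)) (Complex.I * (k : ℂ)) s := by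
    simpa using (Complex.ofRealCLM.hasDerivAt (x := s)).const_mul (Complex.I * (k : ℂ))
  exact h.cexp.congr_deriv (mul_comm _ _)

@[fun_prop]
lemma continuous_expMode (k : ℤ) : Continuous (expMode k) := by
  unfold expMode; fun_prop

@[simp]
lemma expMode_zero (s : ℝ) : expMode 0 s = 1 := by simp [expMode]

lemma expMode_add (k : ℤ) (s t : ℝ) : expMode k (s + t) = expMode k s * expMode k t := by
  rw [expMode, expMode, expMode, ← Complex.exp_add]
  push_cast; ring_nf

lemma expMode_mul_conj (k m : ℤ) (s : ℝ) :
    expMode k s * conj (expMode m s) = expMode (k - m) s := by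
  rw [expMode, expMode, expMode, ← Complex.exp_conj, ← Complex.exp_add]
  simp only [map_mul, Complex.conj_I, Complex.conj_ofReal, map_intCast]
  push_cast; ring_nf

lemma conj_expMode (k : ℤ) (s : ℝ) : conj (expMode k s) = expMode (-k) s := by
  simpa using expMode_mul_conj 0 k s

lemma periodic_expMode (k : ℤ) : Function.Periodic (expMode k) (2 * π) := by
  intro s
  have h : expMode k (2 * π) = 1 := by
    rw [← Complex.exp_int_mul_two_pi_mul_I k, expMode]
    push_cast; ring_nf
  rw [expMode_add, h, mul_one]

@[simp]
lemma norm_expMode (k : ℤ) (s : ℝ) : ‖expMode k s‖ = 1 := by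
  have h := Complex.norm_exp_I_mul_ofReal (k * s)
  push_cast at h
  rwa [← mul_assoc] at h

lemma integral_expMode (N : ℕ) (k : ℤ) :
    ∫ s in (-(N * π))..(N * π), expMode k s = if k = 0 then (2 * (N * π) : ℂ) else 0 := by
  split_ifs with hk
  · subst hk
    simp only [expMode_zero, intervalIntegral.integral_const, Complex.real_smul]
    push_cast; ring
  · have hc : Complex.I * (k : ℂ) ≠ 0 := mul_ne_zero Complex.I_ne_zero (Int.cast_ne_zero.2 hk)
    have hper : expMode k (N * π) = expMode k (-(N * π)) := by
      rw [← (periodic_expMode k).nat_mul N (-(N * π))]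
      ring_nf
    simp only [expMode] at hper ⊢
    rw [integral_exp_mul_complex hc, hper, sub_self, zero_div]

/-- The trigonometric polynomial with coefficients `c` at the frequencies in `S`. -/
def trigPoly (S : Finset ℤ) (c : ℤ → ℂ) (s : ℝ) : ℂ := ∑ k ∈ S, c k * expMode k s

/-- The Fourier coefficients of the derivative of a function with coefficients `c`. -/
def derivCoeff (c : ℤ → ℂ) (k : ℤ) : ℂ := Complex.I * k * c k

lemma norm_derivCoeff (c : ℤ → ℂ) (k : ℤ) : ‖derivCoeff c k‖ = |(k : ℝ)| * ‖c k‖ := by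
  simp [derivCoeff]

lemma hasDerivAt_trigPoly (S : Finset ℤ) (c : ℤ → ℂ) (s : ℝ) :
    HasDerivAt (trigPoly S c) (trigPoly S (derivCoeff c) s) s := by
  refine HasDerivAt.fun_sum fun k _ => ((hasDerivAt_expMode k s).const_mul (c k)).congr_deriv ?_
  rw [derivCoeff]; ring

@[fun_prop]
lemma continuous_trigPoly (S : Finset ℤ) (c : ℤ → ℂ) : Continuous (trigPoly S c) := by
  unfold trigPoly; fun_prop

lemma periodic_trigPoly (S : Finset ℤ) (c : ℤ → ℂ) :
    Function.Periodic (trigPoly S c) (2 * π) := fun s => by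
  simp only [trigPoly, periodic_expMode _ s]

lemma trigPoly_add_right (S : Finset ℤ) (c : ℤ → ℂ) (s t : ℝ) :
    trigPoly S c (s + t) = trigPoly S (fun k => c k * expMode k t) s := by
  simp only [trigPoly, expMode_add]
  exact Finset.sum_congr rfl fun k _ => by ring

lemma trigPoly_sub_trigPoly (S : Finset ℤ) (c d : ℤ → ℂ) (s : ℝ) :
    trigPoly S c s - trigPoly S d s = trigPoly S (fun k => c k - d k) s := by
  simp only [trigPoly, sub_mul, Finset.sum_sub_distrib]

lemma norm_trigPoly_sq (S : Finset ℤ) (c : ℤ → ℂ) (s : ℝ) :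
    ((‖trigPoly S c s‖ ^ 2 : ℝ) : ℂ)
      = ∑ k ∈ S, ∑ m ∈ S, c k * conj (c m) * expMode (k - m) s := by
  rw [Complex.ofReal_pow, ← Complex.mul_conj', trigPoly, map_sum, Finset.sum_mul_sum]
  refine Finset.sum_congr rfl fun k _ => Finset.sum_congr rfl fun m _ => ?_
  rw [map_mul, ← expMode_mul_conj, mul_mul_mul_comm]

lemma integral_norm_trigPoly_sq (N : ℕ) (S : Finset ℤ) (c : ℤ → ℂ) :
    ∫ s in (-(N * π))..(N * π), ‖trigPoly S c s‖ ^ 2 = 2 * (N * π) * ∑ k ∈ S, ‖c k‖ ^ 2 := by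
  apply Complex.ofReal_injective
  rw [← intervalIntegral.integral_ofReal]
  simp_rw [norm_trigPoly_sq]
  rw [intervalIntegral.integral_finsetSum
    fun k _ => Continuous.intervalIntegrable (by fun_prop) _ _]
  push_cast
  rw [Finset.mul_sum]
  refine Finset.sum_congr rfl fun k hk => ?_
  rw [intervalIntegral.integral_finsetSum
    fun m _ => Continuous.intervalIntegrable (by fun_prop) _ _]
  simp only [intervalIntegral.integral_const_mul, integral_expMode, sub_eq_zero, mul_ite, mul_zero,
    Finset.sum_ite_eq, hk, if_true, Complex.mul_conj']
  ring

end TrigonometricPolynomials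

section ParametricIntegrals

variable {E : Type*} [NormedAddCommGroup E] {F F' : ℝ → ℝ → E} {a b : ℝ}

lemma intervalIntegrable_of_continuousOn_uncurry (hab : a ≤ b)
    (hF : ContinuousOn (Function.uncurry F) (Set.univ ×ˢ Set.Icc a b)) (s : ℝ) :
    IntervalIntegrable (F s) volume a b := by
  refine ContinuousOn.intervalIntegrable ?_
  rw [Set.uIcc_of_le hab]
  exact hF.comp (f := fun t => (s, t)) (by fun_prop) fun t ht => ⟨Set.mem_univ _, ht⟩

lemma exists_bound_near_of_continuousOn_uncurry
    (hF : ContinuousOn (Function.uncurry F) (Set.univ ×ˢ Set.Icc a b)) (s : ℝ) :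
    ∃ K : ℝ, ∀ x ∈ Set.Icc (s - 1) (s + 1), ∀ t ∈ Set.Icc a b, ‖F x t‖ ≤ K := by
  obtain ⟨K, hK⟩ := (isCompact_Icc.prod isCompact_Icc).exists_bound_of_continuousOn
    (hF.mono (Set.prod_mono (Set.subset_univ (Set.Icc (s - 1) (s + 1))) le_rfl))
  exact ⟨K, fun x hx t ht => hK (x, t) ⟨hx, ht⟩⟩

variable [NormedSpace ℝ E]

lemma hasDerivAt_intervalIntegral_of_continuousOn (hab : a ≤ b)
    (hF : ContinuousOn (Function.uncurry F) (Set.univ ×ˢ Set.Icc a b))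
    (hF' : ContinuousOn (Function.uncurry F') (Set.univ ×ˢ Set.Icc a b))
    (hd : ∀ s, ∀ t ∈ Set.Icc a b, t ≠ 0 → HasDerivAt (fun x => F x t) (F' s t) s) (s : ℝ) :
    HasDerivAt (fun s => ∫ t in a..b, F s t) (∫ t in a..b, F' s t) s := by
  have hint := intervalIntegrable_of_continuousOn_uncurry hab hF
  have hint' := intervalIntegrable_of_continuousOn_uncurry hab hF'
  obtain ⟨K, hK⟩ := exists_bound_near_of_continuousOn_uncurry hF' s
  have hIcc : ∀ {t}, t ∈ Set.uIoc a b → t ∈ Set.Icc a b := fun ht =>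
    Set.Ioc_subset_Icc_self (Set.uIoc_of_le hab ▸ ht)
  refine (intervalIntegral.hasDerivAt_integral_of_dominated_loc_of_deriv_le
    (bound := fun _ => K) (Icc_mem_nhds (sub_one_lt s) (lt_add_one s))
    (Eventually.of_forall fun x => (hint x).def'.aestronglyMeasurable) (hint s)
    (hint' s).def'.aestronglyMeasurable ?_ intervalIntegrable_const ?_).2
  · exact Eventually.of_forall fun t ht x hx => hK x hx t (hIcc ht)
  · filter_upwards [Measure.ae_ne volume 0] with t ht₀ ht x _
    exact hd x t (hIcc ht) ht₀

lemma continuous_intervalIntegral_of_continuousOn (hab : a ≤ b)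
    (hF : ContinuousOn (Function.uncurry F) (Set.univ ×ˢ Set.Icc a b)) :
    Continuous (fun s => ∫ t in a..b, F s t) := by
  have hint := intervalIntegrable_of_continuousOn_uncurry hab hF
  refine continuous_iff_continuousAt.2 fun s => ?_
  obtain ⟨K, hK⟩ := exists_bound_near_of_continuousOn_uncurry hF s
  have hIcc : ∀ {t}, t ∈ Set.uIoc a b → t ∈ Set.Icc a b := fun ht =>
    Set.Ioc_subset_Icc_self (Set.uIoc_of_le hab ▸ ht)
  refine intervalIntegral.continuousAt_of_dominated_interval (bound := fun _ => K)
    (Eventually.of_forall fun x => (hint x).def'.aestronglyMeasurable) ?_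
    intervalIntegrable_const (Eventually.of_forall fun t ht => ?_)
  · filter_upwards [Icc_mem_nhds (sub_one_lt s) (lt_add_one s)] with x hx
    exact Eventually.of_forall fun t ht => hK x hx t (hIcc ht)
  · have : Continuous fun x => F x t := continuousOn_univ.1 <|
      hF.comp (f := fun x => (x, t)) (by fun_prop) fun x _ => ⟨Set.mem_univ _, hIcc ht⟩
    exact this.continuousAt

end ParametricIntegrals

section WeightedAverages

variable {E : Type*} [NormedAddCommGroup E] [NormedSpace ℝ E] {φ φ' : ℝ → ℝ} {f f' : ℝ → E}

/-- The weighted average `∫₀¹ φ(u) f(s + ut) du` of `f` over the segment from `s` to `s + t`. -/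
def weightedAvg (φ : ℝ → ℝ) (f : ℝ → E) (s t : ℝ) : E := ∫ u in (0 : ℝ)..1, φ u • f (s + u * t)

/-- The mean of `f` over the segment from `s` to `s + t`. -/
abbrev avg (f : ℝ → E) (s t : ℝ) : E := weightedAvg (fun _ => 1) f s t

/-- The average of `f` from `s` to `s + t` weighted towards the starting point `s`. -/
abbrev headAvg (f : ℝ → E) (s t : ℝ) : E := weightedAvg (fun u => 1 - u) f s t

/-- The average of `f` from `s` to `s + t` weighted towards the end point `s + t`. -/
abbrev tailAvg (f : ℝ → E) (s t : ℝ) : E := weightedAvg (fun u => u) f s t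

/-- The average of `f` from `s` to `s + t` weighted towards the middle of the segment; it is the
`t`-derivative of `headAvg` of an antiderivative of `f`. -/
abbrev midAvg (f : ℝ → E) (s t : ℝ) : E := weightedAvg (fun u => u * (1 - u)) f s t

@[fun_prop]
lemma continuous_weightedAvg {X : Type*} [TopologicalSpace X] {g h : X → ℝ} (hφ : Continuous φ)
    (hf : Continuous f) (hg : Continuous g) (hh : Continuous h) :
    Continuous fun x => weightedAvg φ f (g x) (h x) := by
  unfold weightedAvg
  refine intervalIntegral.continuous_parametric_intervalIntegral_of_continuous' ?_ 0 1
  fun_prop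

lemma weightedAvg_sub {ψ : ℝ → ℝ} (hφ : Continuous φ) (hψ : Continuous ψ) (hf : Continuous f)
    (s t : ℝ) :
    weightedAvg (fun u => φ u - ψ u) f s t = weightedAvg φ f s t - weightedAvg ψ f s t := by
  simp only [weightedAvg, sub_smul]
  exact intervalIntegral.integral_sub (Continuous.intervalIntegrable (by fun_prop) _ _)
    (Continuous.intervalIntegrable (by fun_prop) _ _)

lemma headAvg_eq_sub (hf : Continuous f) (s t : ℝ) :
    headAvg f s t = avg f s t - tailAvg f s t :=
  weightedAvg_sub continuous_const continuous_id hf s t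

lemma hasDerivAt_weightedAvg_left (hφ : Continuous φ) (hf' : Continuous f')
    (hd : ∀ s, HasDerivAt f (f' s) s) (s t : ℝ) :
    HasDerivAt (fun s => weightedAvg φ f s t) (weightedAvg φ f' s t) s := by
  have hf : Continuous f := continuous_iff_continuousAt.2 fun s => (hd s).continuousAt
  refine hasDerivAt_intervalIntegral_of_continuousOn (F := fun s u => φ u • f (s + u * t))
    (F' := fun s u => φ u • f' (s + u * t)) zero_le_one ?_ ?_ (fun s u _ _ => ?_) s
  · exact Continuous.continuousOn (by fun_prop)
  · exact Continuous.continuousOn (by fun_prop)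
  · exact ((hd (s + u * t)).comp_add_const s (u * t)).const_smul (φ u)

lemma hasDerivAt_weightedAvg_right (hφ : Continuous φ) (hf' : Continuous f')
    (hd : ∀ s, HasDerivAt f (f' s) s) (s t : ℝ) :
    HasDerivAt (fun t => weightedAvg φ f s t) (weightedAvg (fun u => u * φ u) f' s t) t := by
  have hf : Continuous f := continuous_iff_continuousAt.2 fun s => (hd s).continuousAt
  refine hasDerivAt_intervalIntegral_of_continuousOn (F := fun t u => φ u • f (s + u * t))
    (F' := fun t u => (u * φ u) • f' (s + u * t)) zero_le_one ?_ ?_ (fun t u _ _ => ?_) t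
  · exact Continuous.continuousOn (by fun_prop)
  · exact Continuous.continuousOn (by fun_prop)
  · have hline : HasDerivAt (fun t : ℝ => s + u * t) u t := by
      simpa using ((hasDerivAt_id t).const_mul u).const_add s
    refine (((hd (s + u * t)).scomp t hline).const_smul (φ u)).congr_deriv ?_
    rw [smul_smul, mul_comm]

lemma smul_weightedAvg_deriv [CompleteSpace E] (hφ' : Continuous φ')
    (hφ : ∀ u, HasDerivAt φ (φ' u) u) (hf' : Continuous f') (hd : ∀ s, HasDerivAt f (f' s) s)
    (s t : ℝ) :
    t • weightedAvg φ f' s t = φ 1 • f (s + t) - φ 0 • f s - weightedAvg φ' f s t := by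
  have hf : Continuous f := continuous_iff_continuousAt.2 fun s => (hd s).continuousAt
  have hφc : Continuous φ := continuous_iff_continuousAt.2 fun u => (hφ u).continuousAt
  have hderiv : ∀ u ∈ Set.uIcc (0 : ℝ) 1, HasDerivAt (fun u => φ u • f (s + u * t))
      (φ' u • f (s + u * t) + t • φ u • f' (s + u * t)) u := fun u _ => by
    have hline : HasDerivAt (fun u : ℝ => s + u * t) t u := by
      simpa using ((hasDerivAt_id u).mul_const t).const_add s
    refine ((hφ u).smul ((hd (s + u * t)).scomp u hline)).congr_deriv ?_
    rw [Function.comp_apply, smul_comm, add_comm]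
  have hFTC := intervalIntegral.integral_eq_sub_of_hasDerivAt hderiv
    (Continuous.intervalIntegrable (by fun_prop) _ _)
  rw [intervalIntegral.integral_add (Continuous.intervalIntegrable (by fun_prop) _ _)
    (Continuous.intervalIntegrable (by fun_prop) _ _), intervalIntegral.integral_smul] at hFTC
  simp only [one_mul, zero_mul, add_zero] at hFTC
  rw [← hFTC, weightedAvg, weightedAvg, add_sub_cancel_left]

lemma smul_avg_deriv [CompleteSpace E] (hf' : Continuous f') (hd : ∀ s, HasDerivAt f (f' s) s)
    (s t : ℝ) : t • avg f' s t = f (s + t) - f s := by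
  have h := smul_weightedAvg_deriv continuous_const (fun u => hasDerivAt_const u (1 : ℝ)) hf' hd s t
  simpa [weightedAvg] using h

lemma smul_tailAvg_deriv [CompleteSpace E] (hf' : Continuous f')
    (hd : ∀ s, HasDerivAt f (f' s) s) (s t : ℝ) :
    t • tailAvg f' s t = f (s + t) - avg f s t := by
  simpa using smul_weightedAvg_deriv continuous_const hasDerivAt_id' hf' hd s t

lemma smul_headAvg_deriv [CompleteSpace E] (hf' : Continuous f')
    (hd : ∀ s, HasDerivAt f (f' s) s) (s t : ℝ) :
    t • headAvg f' s t = avg f s t - f s := by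
  rw [headAvg_eq_sub hf', smul_sub, smul_avg_deriv hf' hd, smul_tailAvg_deriv hf' hd,
    sub_sub_sub_cancel_left]

lemma smul_midAvg_deriv [CompleteSpace E] (hf' : Continuous f')
    (hd : ∀ s, HasDerivAt f (f' s) s) (s t : ℝ) :
    t • midAvg f' s t = tailAvg f s t - headAvg f s t := by
  have hf : Continuous f := continuous_iff_continuousAt.2 fun s => (hd s).continuousAt
  have hquad : ∀ u : ℝ, HasDerivAt (fun u : ℝ => u * (1 - u)) ((1 - u) - u) u := fun u =>
    ((hasDerivAt_id' u).mul ((hasDerivAt_id' u).const_sub 1)).congr_deriv (by ring)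
  have h := smul_weightedAvg_deriv (by fun_prop) hquad hf' hd s t
  rw [weightedAvg_sub (by fun_prop) continuous_id' hf] at h
  simpa using h

end WeightedAverages

section SmoothLoops

open scoped ComplexConjugate

/-- A `2π`-periodic curve `Y` in the plane `ℂ` with successive derivatives `y`, `z`, `w`, the last
one continuous, none of whose difference quotients over at most half a period vanishes. -/
structure SmoothLoop (Y y z w : ℝ → ℂ) : Prop where
  periodic : Function.Periodic Y (2 * π)
  hasDerivAt₁ : ∀ s, HasDerivAt Y (y s) s
  hasDerivAt₂ : ∀ s, HasDerivAt y (z s) s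
  hasDerivAt₃ : ∀ s, HasDerivAt z (w s) s
  continuous₃ : Continuous w
  avg_ne_zero : ∀ s, ∀ t ∈ Set.Icc (-π) π, avg y s t ≠ 0

/-- The kernel `F` of the nonlinear part of `g_Y` for `y = Y'` and `z = Y''`: with
`l = ∫₀¹ Y'(s + ut) du` and `p = ∫₀¹ u Y''(s + ut) du` it is the numerator of the singular
integrand divided by `t`, so that it is no longer singular at `t = 0`. -/
def nonlinKernel (y z : ℝ → ℂ) (s t : ℝ) : ℂ :=
  let l := avg y s t
  let p := tailAvg z s t
  p + conj p * l * conj l⁻¹ + t / 2 * (p ^ 2 * l⁻¹ + conj p ^ 2 * l * conj l⁻¹ ^ 2)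

/-- The function `A` whose `t`-derivative is the worst part of the `s`-derivative of
`nonlinKernel`. -/
def kernelPrimitive (y z : ℝ → ℂ) (s t : ℝ) : ℂ :=
  let l := avg y s t
  let a := avg z s t
  y (s + t) * a * l⁻¹ / 2 + conj (y (s + t)) * conj a * l * conj l⁻¹ ^ 2 / 2
    + (y s * conj a - conj (y s) * a) * conj l⁻¹ / 2 + a

/-- The `t`-derivative of `kernelPrimitive`, for `w = z'`. -/
def kernelPrimitiveDeriv (y z w : ℝ → ℂ) (s t : ℝ) : ℂ :=
  let l := avg y s t
  let a := avg z s t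
  let p := tailAvg z s t
  let a' := tailAvg w s t
  (z (s + t) * a * l⁻¹ + y (s + t) * a' * l⁻¹ - y (s + t) * a * p * l⁻¹ ^ 2) / 2
    + (conj (z (s + t)) * conj a * l + conj (y (s + t)) * conj a' * l
        + conj (y (s + t)) * conj a * p) * conj l⁻¹ ^ 2 / 2
    - conj (y (s + t)) * conj a * l * conj p * conj l⁻¹ ^ 3
    + ((y s * conj a' - conj (y s) * a') * conj l⁻¹
        - (y s * conj a - conj (y s) * a) * conj p * conj l⁻¹ ^ 2) / 2 + a'

/-- The remainder `R = ∂ₛF - ∂ₜA`, which is bilinear in `z` up to coefficients of order zero. -/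
def firstRemainder (y z : ℝ → ℂ) (s t : ℝ) : ℂ :=
  let l := avg y s t
  let m := headAvg z s t
  z (s + t) * (-(m * l⁻¹) - conj m * conj l⁻¹) / 2
    + conj (z (s + t)) * (conj (y s) * m - y s * conj m) * conj l⁻¹ ^ 2 / 2

/-- The `s`-derivative of `firstRemainder`, for `w = z'`. -/
def firstRemainderDerivLeft (y z w : ℝ → ℂ) (s t : ℝ) : ℂ :=
  let l := avg y s t
  let a := avg z s t
  let m := headAvg z s t
  let m' := headAvg w s t
  (w (s + t) * (-(m * l⁻¹) - conj m * conj l⁻¹)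
      + z (s + t) * (-(m' * l⁻¹ - m * a * l⁻¹ ^ 2)
          - (conj m' * conj l⁻¹ - conj m * conj a * conj l⁻¹ ^ 2))) / 2
    + (conj (w (s + t)) * (conj (y s) * m - y s * conj m)
        + conj (z (s + t)) * (conj (z s) * m + conj (y s) * m' - z s * conj m - y s * conj m'))
      * conj l⁻¹ ^ 2 / 2
    - conj (z (s + t)) * (conj (y s) * m - y s * conj m) * conj a * conj l⁻¹ ^ 3

/-- The `t`-derivative of `firstRemainder`, for `w = z'`. -/
def firstRemainderDerivRight (y z w : ℝ → ℂ) (s t : ℝ) : ℂ :=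
  let l := avg y s t
  let p := tailAvg z s t
  let m := headAvg z s t
  let m' := midAvg w s t
  (w (s + t) * (-(m * l⁻¹) - conj m * conj l⁻¹)
      + z (s + t) * (-(m' * l⁻¹ - m * p * l⁻¹ ^ 2)
          - (conj m' * conj l⁻¹ - conj m * conj p * conj l⁻¹ ^ 2))) / 2
    + (conj (w (s + t)) * (conj (y s) * m - y s * conj m)
        + conj (z (s + t)) * (conj (y s) * m' - y s * conj m')) * conj l⁻¹ ^ 2 / 2
    - conj (z (s + t)) * (conj (y s) * m - y s * conj m) * conj p * conj l⁻¹ ^ 3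

/-- The remainder `Q = ∂ₛR - ∂ₜR`, in a form free of third derivatives. -/
def secondRemainder (y z : ℝ → ℂ) (s t : ℝ) : ℂ :=
  let l := avg y s t
  let m := headAvg z s t
  let d := z s - 2 * m
  z (s + t) * ((y s * d / t + m * (z s - m)) * l⁻¹ ^ 2
      + (conj (y s) * conj d / t + conj m * (conj (z s) - conj m)) * conj l⁻¹ ^ 2) / 2
    + conj (z (s + t)) * (-(conj (y s) * (conj (y s) * d - y s * conj d) / t)
        + (conj (z s) * m - z s * conj m) * conj (y s)
        + (conj (z s) * l - z s * conj l) * conj m) * conj l⁻¹ ^ 3 / 2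

lemma hasDerivAt_conj {f : ℝ → ℂ} {f' : ℂ} {x : ℝ} (h : HasDerivAt f f' x) :
    HasDerivAt (fun x => conj (f x)) (conj f') x := h.star

lemma periodic_of_hasDerivAt {f f' : ℝ → ℂ} {T : ℝ} (hf : Function.Periodic f T)
    (hd : ∀ s, HasDerivAt f (f' s) s) : Function.Periodic f' T := fun s => by
  have h := (hd (s + T)).comp_add_const s T
  simp only [hf _] at h
  exact h.unique (hd s)

lemma avg_neg_pi {f f' : ℝ → ℂ} (hf : Function.Periodic f (2 * π)) (hf' : Continuous f')
    (hd : ∀ s, HasDerivAt f (f' s) s) (s : ℝ) : avg f' s (-π) = -avg f' s π := by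
  have hshift : f (s + -π) = f (s + π) := by rw [← hf (s + -π)]; ring_nf
  have h := smul_avg_deriv hf' hd s (-π)
  rw [hshift, ← smul_avg_deriv hf' hd s π, neg_smul, ← smul_neg] at h
  exact neg_eq_iff_eq_neg.1 (smul_right_injective ℂ pi_ne_zero (by simpa using h))

lemma hasDerivAt_avg_right {f f' : ℝ → ℂ} (hf' : Continuous f')
    (hd : ∀ s, HasDerivAt f (f' s) s) (s t : ℝ) :
    HasDerivAt (fun t => avg f s t) (tailAvg f' s t) t := by
  simpa using hasDerivAt_weightedAvg_right (φ := fun _ => 1) continuous_const hf' hd s t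

lemma intervalIntegral_congr_of_ne_zero {f g : ℝ → ℂ} {a b : ℝ} (hab : a ≤ b)
    (h : ∀ t ∈ Set.Icc a b, t ≠ 0 → f t = g t) : ∫ t in a..b, f t = ∫ t in a..b, g t := by
  refine intervalIntegral.integral_congr_ae ?_
  filter_upwards [Measure.ae_ne volume 0] with t h₀ ht
  exact h t (Set.Ioc_subset_Icc_self (Set.uIoc_of_le hab ▸ ht)) h₀

namespace SmoothLoop

variable {Y y z w : ℝ → ℂ} {s t : ℝ}

lemma continuous₂ (h : SmoothLoop Y y z w) : Continuous z :=
  continuous_iff_continuousAt.2 fun s => (h.hasDerivAt₃ s).continuousAt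

lemma continuous₁ (h : SmoothLoop Y y z w) : Continuous y :=
  continuous_iff_continuousAt.2 fun s => (h.hasDerivAt₂ s).continuousAt

lemma periodic₁ (h : SmoothLoop Y y z w) : Function.Periodic y (2 * π) :=
  periodic_of_hasDerivAt h.periodic h.hasDerivAt₁

lemma periodic₂ (h : SmoothLoop Y y z w) : Function.Periodic z (2 * π) :=
  periodic_of_hasDerivAt h.periodic₁ h.hasDerivAt₂

lemma continuousOn_inv_avg (h : SmoothLoop Y y z w) :
    ContinuousOn (fun x : ℝ × ℝ => (avg y x.1 x.2)⁻¹) (Set.univ ×ˢ Set.Icc (-π) π) :=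
  (continuous_weightedAvg continuous_const h.continuous₁ continuous_fst
    continuous_snd).continuousOn.inv₀ fun x hx => h.avg_ne_zero x.1 x.2 hx.2

lemma continuousOn_nonlinKernel (h : SmoothLoop Y y z w) :
    ContinuousOn (Function.uncurry (nonlinKernel y z)) (Set.univ ×ˢ Set.Icc (-π) π) := by
  have := h.continuousOn_inv_avg
  have := h.continuous₁
  have := h.continuous₂
  simp only [Function.uncurry_def, nonlinKernel]
  fun_prop

lemma continuousOn_kernelPrimitiveDeriv (h : SmoothLoop Y y z w) :
    ContinuousOn (Function.uncurry (kernelPrimitiveDeriv y z w))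
      (Set.univ ×ˢ Set.Icc (-π) π) := by
  have := h.continuousOn_inv_avg
  have := h.continuous₁
  have := h.continuous₂
  have := h.continuous₃
  simp only [Function.uncurry_def, kernelPrimitiveDeriv]
  fun_prop

lemma continuousOn_firstRemainder (h : SmoothLoop Y y z w) :
    ContinuousOn (Function.uncurry (firstRemainder y z)) (Set.univ ×ˢ Set.Icc (-π) π) := by
  have := h.continuousOn_inv_avg
  have := h.continuous₁
  have := h.continuous₂
  simp only [Function.uncurry_def, firstRemainder]
  fun_prop

lemma continuousOn_firstRemainderDerivLeft (h : SmoothLoop Y y z w) :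
    ContinuousOn (Function.uncurry (firstRemainderDerivLeft y z w))
      (Set.univ ×ˢ Set.Icc (-π) π) := by
  have := h.continuousOn_inv_avg
  have := h.continuous₁
  have := h.continuous₂
  have := h.continuous₃
  simp only [Function.uncurry_def, firstRemainderDerivLeft]
  fun_prop

lemma continuousOn_firstRemainderDerivRight (h : SmoothLoop Y y z w) :
    ContinuousOn (Function.uncurry (firstRemainderDerivRight y z w))
      (Set.univ ×ˢ Set.Icc (-π) π) := by
  have := h.continuousOn_inv_avg
  have := h.continuous₁
  have := h.continuous₂
  have := h.continuous₃
  simp only [Function.uncurry_def, firstRemainderDerivRight]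
  fun_prop

lemma apply_add_eq (h : SmoothLoop Y y z w) (s t : ℝ) :
    y (s + t) = avg y s t + t * tailAvg z s t := by
  have := smul_tailAvg_deriv h.continuous₂ h.hasDerivAt₂ s t
  rw [Complex.real_smul] at this
  linear_combination -this

lemma apply_eq_sub (h : SmoothLoop Y y z w) (s t : ℝ) :
    y s = avg y s t - t * headAvg z s t := by
  have := smul_headAvg_deriv h.continuous₂ h.hasDerivAt₂ s t
  rw [Complex.real_smul] at this
  linear_combination this

lemma avg_eq_add (h : SmoothLoop Y y z w) (s t : ℝ) :
    avg z s t = tailAvg z s t + headAvg z s t := by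
  rw [headAvg_eq_sub h.continuous₂, add_sub_cancel]

lemma hasDerivAt_inv_avg_left (h : SmoothLoop Y y z w) (s : ℝ) (ht : t ∈ Set.Icc (-π) π) :
    HasDerivAt (fun s => (avg y s t)⁻¹) (-avg z s t / avg y s t ^ 2) s :=
  (hasDerivAt_weightedAvg_left continuous_const h.continuous₂ h.hasDerivAt₂ s t).fun_inv
    (h.avg_ne_zero s t ht)

lemma hasDerivAt_inv_avg_right (h : SmoothLoop Y y z w) (s : ℝ) (ht : t ∈ Set.Icc (-π) π) :
    HasDerivAt (fun t => (avg y s t)⁻¹) (-tailAvg z s t / avg y s t ^ 2) t :=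
  (hasDerivAt_avg_right h.continuous₂ h.hasDerivAt₂ s t).fun_inv (h.avg_ne_zero s t ht)

lemma hasDerivAt_kernelPrimitive (h : SmoothLoop Y y z w) (s : ℝ) (ht : t ∈ Set.Icc (-π) π) :
    HasDerivAt (fun t => kernelPrimitive y z s t) (kernelPrimitiveDeriv y z w s t) t := by
  have hl := hasDerivAt_avg_right h.continuous₂ h.hasDerivAt₂ s t
  have ha := hasDerivAt_avg_right h.continuous₃ h.hasDerivAt₃ s t
  have hinv := h.hasDerivAt_inv_avg_right s ht
  have hy := (h.hasDerivAt₂ (s + t)).comp_const_add s t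
  refine ((((((hy.mul ha).mul hinv).div_const 2).add
    (((((hasDerivAt_conj hy).mul (hasDerivAt_conj ha)).mul hl).mul
      ((hasDerivAt_conj hinv).pow 2)).div_const 2)).add
    (((((hasDerivAt_conj ha).const_mul (y s)).sub (ha.const_mul (conj (y s)))).mul
      (hasDerivAt_conj hinv)).div_const 2)).add ha).congr_deriv ?_
  simp only [kernelPrimitiveDeriv, Pi.mul_apply, Pi.pow_apply, Pi.sub_apply, map_div₀, map_neg,
    map_pow, map_inv₀]
  push_cast
  ring

lemma hasDerivAt_nonlinKernel (h : SmoothLoop Y y z w) (s : ℝ) (ht : t ∈ Set.Icc (-π) π)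
    (ht₀ : t ≠ 0) : HasDerivAt (fun s => nonlinKernel y z s t)
      (kernelPrimitiveDeriv y z w s t + firstRemainder y z s t) s := by
  have hl : HasDerivAt (fun s => avg y s t) (avg z s t) s :=
    hasDerivAt_weightedAvg_left continuous_const h.continuous₂ h.hasDerivAt₂ s t
  have hp : HasDerivAt (fun s => tailAvg z s t) (tailAvg w s t) s :=
    hasDerivAt_weightedAvg_left continuous_id' h.continuous₃ h.hasDerivAt₃ s t
  have hinv := h.hasDerivAt_inv_avg_left s ht
  have hpc := hasDerivAt_conj hp
  have hinvc := hasDerivAt_conj hinv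
  refine ((hp.add ((hpc.mul hl).mul hinvc)).add (((hp.pow 2).mul hinv).add
    (((hpc.pow 2).mul hl).mul (hinvc.pow 2)) |>.const_mul ((t : ℂ) / 2))).congr_deriv ?_
  simp only [kernelPrimitiveDeriv, firstRemainder, Pi.mul_apply, Pi.pow_apply, map_div₀, map_neg,
    map_pow, map_inv₀]
  have htail : z (s + t) = avg z s t + t * tailAvg w s t := by
    have := smul_tailAvg_deriv h.continuous₃ h.hasDerivAt₃ s t
    rw [Complex.real_smul] at this; linear_combination -this
  rw [h.apply_add_eq, h.apply_eq_sub s t, htail, h.avg_eq_add]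
  have hl₀ := h.avg_ne_zero s t ht
  have hlc₀ : conj (avg y s t) ≠ 0 := (map_ne_zero _).2 hl₀
  have ht₀' : (t : ℂ) ≠ 0 := Complex.ofReal_ne_zero.2 ht₀
  simp only [map_add, map_sub, map_mul, Complex.conj_ofReal]
  push_cast
  field_simp
  ring

lemma hasDerivAt_firstRemainder_left (h : SmoothLoop Y y z w) (s : ℝ)
    (ht : t ∈ Set.Icc (-π) π) : HasDerivAt (fun s => firstRemainder y z s t)
      (firstRemainderDerivLeft y z w s t) s := by
  have hm := hasDerivAt_weightedAvg_left (φ := fun u => 1 - u) (by fun_prop) h.continuous₃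
    h.hasDerivAt₃ s t
  have hinv := h.hasDerivAt_inv_avg_left s ht
  have hz := (h.hasDerivAt₃ (s + t)).comp_add_const s t
  have hy := h.hasDerivAt₂ s
  refine (((hz.mul ((hm.mul hinv).neg.sub
      ((hasDerivAt_conj hm).mul (hasDerivAt_conj hinv)))).div_const 2).add
    ((((hasDerivAt_conj hz).mul (((hasDerivAt_conj hy).mul hm).sub
      (hy.mul (hasDerivAt_conj hm)))).mul ((hasDerivAt_conj hinv).pow 2)).div_const 2)).congr_deriv
    ?_
  simp only [firstRemainderDerivLeft, Pi.mul_apply, Pi.pow_apply, Pi.sub_apply, Pi.neg_apply,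
    map_div₀, map_neg, map_pow, map_inv₀]
  push_cast
  ring

lemma hasDerivAt_firstRemainder_right (h : SmoothLoop Y y z w) (s : ℝ)
    (ht : t ∈ Set.Icc (-π) π) : HasDerivAt (fun t => firstRemainder y z s t)
      (firstRemainderDerivRight y z w s t) t := by
  have hm := hasDerivAt_weightedAvg_right (φ := fun u => 1 - u) (by fun_prop) h.continuous₃
    h.hasDerivAt₃ s t
  have hinv := h.hasDerivAt_inv_avg_right s ht
  have hz := (h.hasDerivAt₃ (s + t)).comp_const_add s t
  refine (((hz.mul ((hm.mul hinv).neg.sub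
      ((hasDerivAt_conj hm).mul (hasDerivAt_conj hinv)))).div_const 2).add
    ((((hasDerivAt_conj hz).mul ((hm.const_mul (conj (y s))).sub
      ((hasDerivAt_conj hm).const_mul (y s)))).mul
        ((hasDerivAt_conj hinv).pow 2)).div_const 2)).congr_deriv ?_
  simp only [firstRemainderDerivRight, Pi.mul_apply, Pi.pow_apply, Pi.sub_apply, Pi.neg_apply,
    map_div₀, map_neg, map_pow, map_inv₀]
  push_cast
  ring

lemma firstRemainderDerivLeft_sub_right (h : SmoothLoop Y y z w) (s : ℝ)
    (ht : t ∈ Set.Icc (-π) π) (ht₀ : t ≠ 0) :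
    firstRemainderDerivLeft y z w s t - firstRemainderDerivRight y z w s t
      = secondRemainder y z s t := by
  have hhead : z s = avg z s t - t * headAvg w s t := by
    have := smul_headAvg_deriv h.continuous₃ h.hasDerivAt₃ s t
    rw [Complex.real_smul] at this; linear_combination this
  have hmid : tailAvg z s t = headAvg z s t + t * midAvg w s t := by
    have := smul_midAvg_deriv h.continuous₃ h.hasDerivAt₃ s t
    rw [Complex.real_smul] at this; linear_combination -this
  have hl₀ := h.avg_ne_zero s t ht
  have hlc₀ : conj (avg y s t) ≠ 0 := (map_ne_zero _).2 hl₀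
  have ht₀' : (t : ℂ) ≠ 0 := Complex.ofReal_ne_zero.2 ht₀
  simp only [firstRemainderDerivLeft, firstRemainderDerivRight, secondRemainder, map_inv₀]
  rw [h.apply_eq_sub s t, hhead, h.avg_eq_add, hmid]
  simp only [map_add, map_sub, map_mul, Complex.conj_ofReal, map_ofNat]
  field_simp
  ring

lemma integral_kernelPrimitiveDeriv (h : SmoothLoop Y y z w) (s : ℝ) :
    ∫ t in (-π)..π, kernelPrimitiveDeriv y z w s t = (2 / π : ℂ) * (y (s + π) - y s) := by
  have hle : -π ≤ π := neg_le_self pi_nonneg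
  have hshift : y (s + -π) = y (s + π) := by rw [← h.periodic₁ (s + -π)]; ring_nf
  rw [intervalIntegral.integral_eq_sub_of_hasDerivAt (f := kernelPrimitive y z s)
    (fun t ht => h.hasDerivAt_kernelPrimitive s (Set.uIcc_of_le hle ▸ ht))
    (intervalIntegrable_of_continuousOn_uncurry hle h.continuousOn_kernelPrimitiveDeriv s)]
  have hl₀ := h.avg_ne_zero s π ⟨hle, le_rfl⟩
  have hlc₀ : conj (avg y s π) ≠ 0 := (map_ne_zero _).2 hl₀
  have hπ : (π : ℂ) ≠ 0 := Complex.ofReal_ne_zero.2 pi_ne_zero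
  have ha : (π : ℂ) * avg z s π = y (s + π) - y s := by
    rw [← smul_avg_deriv h.continuous₂ h.hasDerivAt₂ s π, Complex.real_smul]
  simp only [kernelPrimitive, hshift, avg_neg_pi h.periodic h.continuous₁ h.hasDerivAt₁,
    avg_neg_pi h.periodic₁ h.continuous₂ h.hasDerivAt₂, map_neg, map_inv₀, inv_neg, ← ha]
  field_simp
  ring

lemma integral_firstRemainderDerivRight (h : SmoothLoop Y y z w) (s : ℝ) :
    ∫ t in (-π)..π, firstRemainderDerivRight y z w s t = -(2 / π : ℂ) * z (s + π) := by
  have hle : -π ≤ π := neg_le_self pi_nonneg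
  have hshift : z (s + -π) = z (s + π) := by rw [← h.periodic₂ (s + -π)]; ring_nf
  rw [intervalIntegral.integral_eq_sub_of_hasDerivAt (f := firstRemainder y z s)
    (fun t ht => h.hasDerivAt_firstRemainder_right s (Set.uIcc_of_le hle ▸ ht))
    (intervalIntegrable_of_continuousOn_uncurry hle h.continuousOn_firstRemainderDerivRight s)]
  have hl₀ := h.avg_ne_zero s π ⟨hle, le_rfl⟩
  have hlc₀ : conj (avg y s π) ≠ 0 := (map_ne_zero _).2 hl₀
  have hπ : (π : ℂ) ≠ 0 := Complex.ofReal_ne_zero.2 pi_ne_zero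
  have hhead : headAvg z s π = (avg y s π - y s) / π := by
    have := smul_headAvg_deriv h.continuous₂ h.hasDerivAt₂ s π
    rw [← this, Complex.real_smul, mul_div_cancel_left₀ _ hπ]
  have hhead' : headAvg z s (-π) = (avg y s π + y s) / π := by
    have := smul_headAvg_deriv h.continuous₂ h.hasDerivAt₂ s (-π)
    rw [avg_neg_pi h.periodic h.continuous₁ h.hasDerivAt₁, Complex.real_smul] at this
    rw [eq_div_iff hπ]
    push_cast at this
    linear_combination -this
  simp only [firstRemainder, hshift, hhead, hhead',
    avg_neg_pi h.periodic h.continuous₁ h.hasDerivAt₁, map_neg, map_inv₀, map_div₀, map_add,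
    map_sub, Complex.conj_ofReal, inv_neg]
  field_simp
  ring

lemma hasDerivAt_integral_nonlinKernel (h : SmoothLoop Y y z w) (s : ℝ) :
    HasDerivAt (fun s => ∫ t in (-π)..π, nonlinKernel y z s t)
      ((2 / π : ℂ) * (y (s + π) - y s) + ∫ t in (-π)..π, firstRemainder y z s t) s := by
  have hle : -π ≤ π := neg_le_self pi_nonneg
  have hA := h.continuousOn_kernelPrimitiveDeriv
  have hR := h.continuousOn_firstRemainder
  refine (hasDerivAt_intervalIntegral_of_continuousOn hle h.continuousOn_nonlinKernel
    (F' := fun s t => kernelPrimitiveDeriv y z w s t + firstRemainder y z s t) (hA.add hR)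
    (fun s t ht ht₀ => h.hasDerivAt_nonlinKernel s ht ht₀) s).congr_deriv ?_
  rw [← h.integral_kernelPrimitiveDeriv s]
  exact intervalIntegral.integral_add (intervalIntegrable_of_continuousOn_uncurry hle hA s)
    (intervalIntegrable_of_continuousOn_uncurry hle hR s)

lemma integral_secondRemainder (h : SmoothLoop Y y z w) (s : ℝ) :
    ∫ t in (-π)..π, secondRemainder y z s t = ∫ t in (-π)..π,
      (firstRemainderDerivLeft y z w s t - firstRemainderDerivRight y z w s t) :=
  intervalIntegral_congr_of_ne_zero (neg_le_self pi_nonneg) fun _ ht ht₀ =>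
    (h.firstRemainderDerivLeft_sub_right s ht ht₀).symm

lemma hasDerivAt_deriv_integral_nonlinKernel (h : SmoothLoop Y y z w) (s : ℝ) :
    HasDerivAt (fun s => (2 / π : ℂ) * (y (s + π) - y s) + ∫ t in (-π)..π, firstRemainder y z s t)
      (-(2 / π : ℂ) * z s + ∫ t in (-π)..π, secondRemainder y z s t) s := by
  have hle : -π ≤ π := neg_le_self pi_nonneg
  have hL := h.continuousOn_firstRemainderDerivLeft
  have hRint := hasDerivAt_intervalIntegral_of_continuousOn hle h.continuousOn_firstRemainder hL
    (fun s t ht _ => h.hasDerivAt_firstRemainder_left s ht) s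
  have hbdry := (((h.hasDerivAt₂ (s + π)).comp_add_const s π).sub
    (h.hasDerivAt₂ s)).const_mul (2 / π : ℂ)
  refine (hbdry.add hRint).congr_deriv ?_
  rw [h.integral_secondRemainder, intervalIntegral.integral_sub
    (intervalIntegrable_of_continuousOn_uncurry hle hL s)
    (intervalIntegrable_of_continuousOn_uncurry hle h.continuousOn_firstRemainderDerivRight s),
    h.integral_firstRemainderDerivRight]
  ring

lemma continuous_integral_secondRemainder (h : SmoothLoop Y y z w) :
    Continuous fun s => ∫ t in (-π)..π, secondRemainder y z s t := by
  simp only [h.integral_secondRemainder]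
  exact continuous_intervalIntegral_of_continuousOn (neg_le_self pi_nonneg)
    (h.continuousOn_firstRemainderDerivLeft.sub h.continuousOn_firstRemainderDerivRight)

end SmoothLoop

end SmoothLoops

section SingularKernels

lemma lintegral_comp_abs (F : ℝ → ℝ≥0∞) :
    ∫⁻ h : ℝ, F |h| = 2 * ∫⁻ h in Set.Ioi (0 : ℝ), F h := by
  have hpos : ∫⁻ h in Set.Ioi (0 : ℝ), F |h| = ∫⁻ h in Set.Ioi (0 : ℝ), F h :=
    setLIntegral_congr_fun measurableSet_Ioi fun x hx => by rw [abs_of_pos hx]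
  have hneg : ∫⁻ h in (Set.Ioi (0 : ℝ))ᶜ, F |h| = ∫⁻ h in Set.Ioi (0 : ℝ), F |h| := by
    have h := (Measure.measurePreserving_neg (volume : Measure ℝ)).setLIntegral_comp_preimage_emb
      (MeasurableEquiv.neg ℝ).measurableEmbedding (fun x => F |x|) (Set.Ici (0 : ℝ))
    simp only [abs_neg, Set.neg_preimage, Set.neg_Ici, neg_zero] at h
    rw [Set.compl_Ioi, h]
    exact setLIntegral_congr Ioi_ae_eq_Ici.symm
  rw [← lintegral_add_compl _ measurableSet_Ioi, hneg, hpos, two_mul]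

lemma lintegral_Ioc_rpow {a r : ℝ} (ha : -1 < a) (hr : 0 ≤ r) :
    ∫⁻ t in Set.Ioc 0 r, ENNReal.ofReal (t ^ a) = ENNReal.ofReal (r ^ (a + 1) / (a + 1)) := by
  have hint : IntegrableOn (fun t : ℝ => t ^ a) (Set.Ioc 0 r) :=
    (intervalIntegrable_iff_integrableOn_Ioc_of_le hr).1
      (intervalIntegral.intervalIntegrable_rpow' ha)
  rw [← ofReal_integral_eq_lintegral_ofReal hint, ← intervalIntegral.integral_of_le hr,
    integral_rpow (Or.inl ha), Real.zero_rpow (by linarith), sub_zero]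
  filter_upwards [ae_restrict_mem measurableSet_Ioc] with t ht
  exact Real.rpow_nonneg ht.1.le a

lemma lintegral_Ioi_rpow {a r : ℝ} (ha : a < -1) (hr : 0 < r) :
    ∫⁻ t in Set.Ioi r, ENNReal.ofReal (t ^ a) = ENNReal.ofReal (-r ^ (a + 1) / (a + 1)) := by
  rw [← ofReal_integral_eq_lintegral_ofReal (integrableOn_Ioi_rpow_of_lt ha hr),
    integral_Ioi_rpow_of_lt ha hr]
  filter_upwards [ae_restrict_mem measurableSet_Ioi] with t ht
  exact Real.rpow_nonneg (hr.le.trans (le_of_lt ht)) a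

lemma lintegral_abs_rpow {a r : ℝ} (ha : -1 < a) (hr : 0 ≤ r) :
    ∫⁻ t in Set.Ioc (-r) r, ENNReal.ofReal (|t| ^ a)
      = ENNReal.ofReal (2 * (r ^ (a + 1) / (a + 1))) := by
  have hind : ∀ t : ℝ, (Set.Icc (-r) r).indicator (fun t => ENNReal.ofReal (|t| ^ a)) t
      = (Set.Iic r).indicator (fun t => ENNReal.ofReal (t ^ a)) |t| := fun t => by
    simp only [Set.indicator_apply, Set.mem_Icc, Set.mem_Iic, abs_le]
  rw [setLIntegral_congr Ioc_ae_eq_Icc, ← lintegral_indicator measurableSet_Icc]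
  simp_rw [hind]
  rw [lintegral_comp_abs, setLIntegral_indicator measurableSet_Iic, Set.inter_comm,
    Set.Ioi_inter_Iic, lintegral_Ioc_rpow ha hr, ENNReal.ofReal_mul zero_le_two,
    ENNReal.ofReal_ofNat]

lemma lintegral_Ioc_rpow_mul_min_sq_le {κ : ℝ} (hκ : 0 < κ) :
    ∫⁻ h in Set.Ioc 0 κ⁻¹, ENNReal.ofReal (h ^ (-(3 / 2) : ℝ) * min 2 (κ * h) ^ 2)
      ≤ ENNReal.ofReal (κ ^ (1 / 2 : ℝ)) := by
  have hpoint : ∀ h ∈ Set.Ioc 0 κ⁻¹, ENNReal.ofReal (h ^ (-(3 / 2) : ℝ) * min 2 (κ * h) ^ 2)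
      ≤ ENNReal.ofReal (κ ^ 2) * ENNReal.ofReal (h ^ (1 / 2 : ℝ)) := fun h hh => by
    rw [← ENNReal.ofReal_mul (sq_nonneg κ)]
    refine ENNReal.ofReal_le_ofReal ?_
    have hpow : h ^ (1 / 2 : ℝ) = h ^ (-(3 / 2) : ℝ) * h ^ 2 := by
      rw [← Real.rpow_natCast h, ← Real.rpow_add hh.1]; norm_num
    have hh₀ := hh.1.le
    calc _ ≤ h ^ (-(3 / 2) : ℝ) * (κ * h) ^ 2 := by gcongr; exact min_le_right _ _
      _ = _ := by rw [hpow]; ring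
  refine (setLIntegral_mono (by fun_prop) hpoint).trans ?_
  rw [lintegral_const_mul _ (by fun_prop), lintegral_Ioc_rpow (by norm_num) (inv_pos.2 hκ).le,
    ← ENNReal.ofReal_mul (sq_nonneg κ)]
  refine ENNReal.ofReal_le_ofReal ?_
  have hpow : κ⁻¹ ^ (1 / 2 + 1 : ℝ) = κ ^ (1 / 2 : ℝ) * κ⁻¹ ^ 2 := by
    rw [Real.inv_rpow hκ.le, ← Real.rpow_neg hκ.le, inv_pow, ← Real.rpow_natCast,
      ← Real.rpow_neg hκ.le, ← Real.rpow_add hκ]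
    norm_num
  have hcancel : κ ^ 2 * κ⁻¹ ^ 2 = 1 := by rw [← mul_pow, mul_inv_cancel₀ hκ.ne', one_pow]
  calc κ ^ 2 * (κ⁻¹ ^ (1 / 2 + 1 : ℝ) / (1 / 2 + 1))
      = κ ^ 2 * κ⁻¹ ^ 2 * (2 / 3 * κ ^ (1 / 2 : ℝ)) := by rw [hpow]; ring
    _ ≤ κ ^ (1 / 2 : ℝ) := by rw [hcancel]; linarith [Real.rpow_nonneg hκ.le (1 / 2)]

lemma lintegral_Ioi_rpow_mul_min_sq_le {κ : ℝ} (hκ : 0 < κ) :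
    ∫⁻ h in Set.Ioi κ⁻¹, ENNReal.ofReal (h ^ (-(3 / 2) : ℝ) * min 2 (κ * h) ^ 2)
      ≤ ENNReal.ofReal (8 * κ ^ (1 / 2 : ℝ)) := by
  have hpoint : ∀ h ∈ Set.Ioi κ⁻¹, ENNReal.ofReal (h ^ (-(3 / 2) : ℝ) * min 2 (κ * h) ^ 2)
      ≤ ENNReal.ofReal (2 ^ 2) * ENNReal.ofReal (h ^ (-(3 / 2) : ℝ)) := fun h hh => by
    have hh₀ : 0 ≤ h := (inv_pos.2 hκ).le.trans (le_of_lt hh)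
    rw [← ENNReal.ofReal_mul (by norm_num), mul_comm ((2 : ℝ) ^ 2)]
    gcongr
    exact min_le_left _ _
  refine (setLIntegral_mono (by fun_prop) hpoint).trans_eq ?_
  rw [lintegral_const_mul _ (by fun_prop), lintegral_Ioi_rpow (by norm_num) (inv_pos.2 hκ),
    ← ENNReal.ofReal_mul (by norm_num), Real.inv_rpow hκ.le, ← Real.rpow_neg hκ.le]
  congr 1; norm_num; ring

lemma lintegral_abs_rpow_mul_min_sq_le {κ : ℝ} (hκ : 0 ≤ κ) :
    ∫⁻ h : ℝ, ENNReal.ofReal (|h| ^ (-(3 / 2) : ℝ) * min 2 (κ * |h|) ^ 2)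
      ≤ ENNReal.ofReal (18 * κ ^ (1 / 2 : ℝ)) := by
  rcases hκ.eq_or_lt with rfl | hκ
  · simp
  rw [lintegral_comp_abs (fun h => ENNReal.ofReal (h ^ (-(3 / 2) : ℝ) * min 2 (κ * h) ^ 2)),
    ← Set.Ioc_union_Ioi_eq_Ioi (inv_pos.2 hκ).le, lintegral_union measurableSet_Ioi
    (Set.Ioc_disjoint_Ioi le_rfl)]
  calc _ ≤ 2 * (ENNReal.ofReal (κ ^ (1 / 2 : ℝ)) + ENNReal.ofReal (8 * κ ^ (1 / 2 : ℝ))) := by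
        gcongr
        exacts [lintegral_Ioc_rpow_mul_min_sq_le hκ, lintegral_Ioi_rpow_mul_min_sq_le hκ]
    _ = _ := by
      rw [← ENNReal.ofReal_add (by positivity) (by positivity), ← ENNReal.ofReal_ofNat 2,
        ← ENNReal.ofReal_mul zero_le_two]
      congr 1; ring

lemma sq_lintegral_le_of_sq_le {α : Type*} [MeasurableSpace α] {μ : Measure α} {F f g : α → ℝ≥0∞}
    (hf : AEMeasurable f μ) (hg : AEMeasurable g μ) (hF : ∀ᵐ x ∂μ, F x ^ 2 ≤ f x * g x) :
    (∫⁻ x, F x ∂μ) ^ 2 ≤ (∫⁻ x, f x ∂μ) * ∫⁻ x, g x ∂μ := by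
  have hsqrt : ∀ a : ℝ≥0∞, (a ^ (1 / 2 : ℝ)) ^ 2 = a := fun a => by
    rw [← ENNReal.rpow_natCast, ← ENNReal.rpow_mul]; norm_num
  have h := ENNReal.lintegral_mul_norm_pow_le hf hg (p := 1 / 2) (q := 1 / 2) (by norm_num)
    (by norm_num) (by norm_num)
  have hmono : ∫⁻ x, F x ∂μ ≤ ∫⁻ x, f x ^ (1 / 2 : ℝ) * g x ^ (1 / 2 : ℝ) ∂μ := by
    refine lintegral_mono_ae (hF.mono fun x hx => ?_)
    rwa [← ENNReal.pow_le_pow_left_iff two_ne_zero, mul_pow, hsqrt, hsqrt]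
  calc (∫⁻ x, F x ∂μ) ^ 2
      ≤ ((∫⁻ x, f x ∂μ) ^ (1 / 2 : ℝ) * (∫⁻ x, g x ∂μ) ^ (1 / 2 : ℝ)) ^ 2 := by
        gcongr; exact hmono.trans h
    _ = (∫⁻ x, f x ∂μ) * ∫⁻ x, g x ∂μ := by rw [mul_pow, hsqrt, hsqrt]

end SingularKernels

section Hardy

/-- The averaging kernel `|t| ^ (-3/2)` on the window `80|t| ≤ σ ≤ 81|t|`, by which the value at `t`
is compared with the values at the much larger arguments `σ`. The window is far enough out for
the averaged weight to be at most a quarter of the original one, so that in the proof of Hardy's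
inequality it can be absorbed. -/
def hardyKernel (t σ : ℝ) : ℝ≥0∞ :=
  (Set.Icc (80 * |t|) (81 * |t|)).indicator (fun _ => ENNReal.ofReal (|t| ^ (-(3 / 2) : ℝ))) σ

lemma measurable_hardyKernel : Measurable (fun p : ℝ × ℝ => hardyKernel p.1 p.2) := by
  have hset : MeasurableSet
      ({p : ℝ × ℝ | 80 * |p.1| ≤ p.2} ∩ {p : ℝ × ℝ | p.2 ≤ 81 * |p.1|}) :=
    (measurableSet_le (by fun_prop) (by fun_prop)).inter
      (measurableSet_le (by fun_prop) (by fun_prop))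
  exact Measurable.indicator (f := fun p : ℝ × ℝ => ENNReal.ofReal (|p.1| ^ (-(3 / 2) : ℝ)))
    (by fun_prop) hset

lemma lintegral_hardyKernel_right {t : ℝ} (ht : t ≠ 0) :
    ∫⁻ σ, hardyKernel t σ = ENNReal.ofReal (|t| ^ (-(1 / 2) : ℝ)) := by
  have hpos : 0 < |t| := abs_pos.2 ht
  have hlen : 81 * |t| - 80 * |t| = |t| ^ (1 : ℝ) := by rw [Real.rpow_one]; ring
  simp only [hardyKernel]
  rw [lintegral_indicator measurableSet_Icc, setLIntegral_const, Real.volume_Icc,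
    ← ENNReal.ofReal_mul (by positivity), hlen, ← Real.rpow_add hpos]
  norm_num

lemma lintegral_hardyKernel_left_le {σ : ℝ} (hσ : 0 < σ) :
    ∫⁻ t, hardyKernel t σ ≤ ENNReal.ofReal (1 / 4 * |σ| ^ (-(1 / 2) : ℝ)) := by
  have hkernel : ∀ t, hardyKernel t σ ≤ (Set.Icc (σ / 81) (σ / 80)).indicator
      (fun _ => ENNReal.ofReal ((σ / 81) ^ (-(3 / 2) : ℝ))) |t| := fun t => by
    rw [hardyKernel]
    refine Set.indicator_apply_le' (fun hmem => ?_) fun _ => zero_le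
    have ht : |t| ∈ Set.Icc (σ / 81) (σ / 80) := ⟨by linarith [hmem.2], by linarith [hmem.1]⟩
    rw [Set.indicator_of_mem ht]
    exact ENNReal.ofReal_le_ofReal
      (Real.rpow_le_rpow_of_nonpos (by positivity) ht.1 (by norm_num))
  have hwindow : Set.Icc (σ / 81) (σ / 80) ⊆ Set.Ioi 0 := fun x hx =>
    (by positivity : 0 < σ / 81).trans_le hx.1
  have h81 : (81 : ℝ) ^ (-(3 / 2) : ℝ) = 1 / 729 := by
    rw [show (81 : ℝ) = 9 ^ (2 : ℝ) by norm_num, ← Real.rpow_mul (by norm_num)]; norm_num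
  have hpow : σ ^ (-(1 / 2) : ℝ) = σ ^ (-(3 / 2) : ℝ) * σ := by
    rw [← Real.rpow_add_one hσ.ne']; norm_num
  refine (lintegral_mono hkernel).trans ?_
  rw [lintegral_comp_abs, setLIntegral_indicator measurableSet_Icc, Set.inter_eq_left.2 hwindow,
    setLIntegral_const, Real.volume_Icc, ← ENNReal.ofReal_ofNat 2,
    ← ENNReal.ofReal_mul (by positivity), ← ENNReal.ofReal_mul (by positivity)]
  refine ENNReal.ofReal_le_ofReal ?_
  rw [abs_of_pos hσ, Real.div_rpow hσ.le (by norm_num), h81, hpow]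
  have hnonneg : 0 ≤ σ ^ (-(3 / 2) : ℝ) * σ := by positivity
  calc _ = σ ^ (-(3 / 2) : ℝ) * σ * (9 / 40) := by ring
    _ ≤ _ := by linarith

lemma setLIntegral_hardyKernel_left_le (a σ : ℝ) :
    ∫⁻ t in Set.Ioc (-a) a, hardyKernel t σ ≤ (Set.Ioc 0 (81 * a)).indicator
      (fun σ => ENNReal.ofReal (1 / 4 * |σ| ^ (-(1 / 2) : ℝ))) σ := by
  by_cases hσ : σ ∈ Set.Ioc 0 (81 * a)
  · rw [Set.indicator_of_mem hσ]
    exact (setLIntegral_le_lintegral _ _).trans (lintegral_hardyKernel_left_le hσ.1)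
  · rw [Set.indicator_of_notMem hσ, nonpos_iff_eq_zero]
    have hzero : ∀ᵐ t ∂volume.restrict (Set.Ioc (-a) a), hardyKernel t σ = 0 := by
      filter_upwards [ae_restrict_mem measurableSet_Ioc,
        ae_restrict_of_ae (Measure.ae_ne volume (0 : ℝ))] with t ht ht₀
      have hpos : 0 < |t| := abs_pos.2 ht₀
      have hle : |t| ≤ a := abs_le.2 ⟨ht.1.le, ht.2⟩
      exact Set.indicator_of_notMem
        (fun hmem => hσ ⟨by linarith [hmem.1], by linarith [hmem.2]⟩) _
    rw [lintegral_congr_ae hzero, lintegral_zero]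

lemma hardyKernel_le (t σ : ℝ) :
    hardyKernel t σ ≤ 1000 * ENNReal.ofReal (|σ - t| ^ (-(3 / 2) : ℝ)) := by
  rw [hardyKernel]
  refine Set.indicator_apply_le' (fun hmem => ?_) fun _ => zero_le
  rcases eq_or_ne t 0 with rfl | ht
  · simp [Real.zero_rpow]
  have ht₀ : 0 < |t| := abs_pos.2 ht
  have hnear : |σ - t| ≤ 100 * |t| :=
    abs_le.2 ⟨by linarith [hmem.1, le_abs_self t], by linarith [hmem.2, neg_abs_le t]⟩
  have hpos : 0 < |σ - t| := abs_pos.2 (sub_pos.2 (by linarith [hmem.1, le_abs_self t])).ne'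
  have h100 : (100 : ℝ) ^ (-(3 / 2) : ℝ) = 1 / 1000 := by
    rw [show (100 : ℝ) = 10 ^ (2 : ℝ) by norm_num, ← Real.rpow_mul (by norm_num)]; norm_num
  rw [← ENNReal.ofReal_ofNat 1000, ← ENNReal.ofReal_mul (by norm_num)]
  refine ENNReal.ofReal_le_ofReal ?_
  calc |t| ^ (-(3 / 2) : ℝ) = 1000 * (100 * |t|) ^ (-(3 / 2) : ℝ) := by
        rw [Real.mul_rpow (by norm_num) ht₀.le, h100]; ring
    _ ≤ _ := mul_le_mul_of_nonneg_left
        (Real.rpow_le_rpow_of_nonpos hpos hnear (by norm_num)) (by norm_num)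

variable {E : Type*} [NormedAddCommGroup E] {f : ℝ → E} {a : ℝ}

lemma enorm_sq_le_two_mul_add (x y : E) : ‖x‖ₑ ^ 2 ≤ 2 * ‖y‖ₑ ^ 2 + 2 * ‖y - x‖ₑ ^ 2 := by
  have htri : ‖x‖ ≤ ‖y‖ + ‖y - x‖ := by simpa using norm_sub_le y (y - x)
  simp only [← ofReal_norm, ← ENNReal.ofReal_pow (norm_nonneg _), ← ENNReal.ofReal_ofNat 2]
  rw [← ENNReal.ofReal_mul (by norm_num), ← ENNReal.ofReal_mul (by norm_num),
    ← ENNReal.ofReal_add (by positivity) (by positivity)]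
  refine ENNReal.ofReal_le_ofReal ?_
  nlinarith [sq_nonneg (‖y‖ - ‖y - x‖), norm_nonneg x]

lemma lintegral_abs_rpow_mul_enorm_sq_ne_top (hf : Continuous f) (ha : 0 < a) :
    ∫⁻ t in Set.Ioc (-a) a, ENNReal.ofReal (|t| ^ (-(1 / 2) : ℝ)) * ‖f t‖ₑ ^ 2 ≠ ⊤ := by
  obtain ⟨K, hK⟩ := isCompact_Icc.exists_bound_of_continuousOn (s := Set.Icc (-a) a) hf.continuousOn
  have hbound : ∀ t ∈ Set.Ioc (-a) a, ENNReal.ofReal (|t| ^ (-(1 / 2) : ℝ)) * ‖f t‖ₑ ^ 2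
      ≤ ENNReal.ofReal (|t| ^ (-(1 / 2) : ℝ)) * ENNReal.ofReal K ^ 2 := fun t ht => by
    gcongr
    rw [← ofReal_norm]
    exact ENNReal.ofReal_le_ofReal (hK t (Set.Ioc_subset_Icc_self ht))
  refine ne_top_of_le_ne_top ?_ (setLIntegral_mono (by fun_prop) hbound)
  rw [lintegral_mul_const _ (by fun_prop), lintegral_abs_rpow (by norm_num) ha.le]
  finiteness

lemma measurable_hardyKernel_mul_enorm_sq (hf : Continuous f) :
    Measurable fun p : ℝ × ℝ => hardyKernel p.1 p.2 * (2 * ‖f p.2‖ₑ ^ 2) := by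
  have hmeas : Measurable fun p : ℝ × ℝ => ‖f p.2‖ₑ ^ 2 := Continuous.measurable (by fun_prop)
  exact measurable_hardyKernel.mul (hmeas.const_mul 2)

lemma lintegral_hardyKernel_mul_apply_le (hf : Continuous f) (ha : 0 < a) :
    ∫⁻ t in Set.Ioc (-a) a, ∫⁻ σ, hardyKernel t σ * (2 * ‖f σ‖ₑ ^ 2)
      ≤ (∫⁻ t in Set.Ioc (-a) a, ENNReal.ofReal (|t| ^ (-(1 / 2) : ℝ)) * ‖f t‖ₑ ^ 2) / 2
        + (ENNReal.ofReal (a ^ (-(1 / 2) : ℝ)) * ∫⁻ σ in Set.Ioc 0 (81 * a), ‖f σ‖ₑ ^ 2) / 2 := by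
  have hmeas : Measurable fun t => ‖f t‖ₑ ^ 2 := Continuous.measurable (by fun_prop)
  have hsplit : Set.Ioc 0 (81 * a) = Set.Ioc 0 a ∪ Set.Ioc a (81 * a) :=
    (Set.Ioc_union_Ioc_eq_Ioc ha.le (by linarith)).symm
  have hquarter : ∀ x : ℝ, ENNReal.ofReal (1 / 4 * x) * 2 = 2⁻¹ * ENNReal.ofReal x := fun x => by
    rw [← ENNReal.ofReal_ofNat 2, ← ENNReal.ofReal_inv_of_pos (by norm_num),
      ← ENNReal.ofReal_mul' (by norm_num), ← ENNReal.ofReal_mul (by norm_num)]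
    congr 1; ring
  rw [lintegral_lintegral_swap (measurable_hardyKernel_mul_enorm_sq hf).aemeasurable,
    ENNReal.div_eq_inv_mul, ENNReal.div_eq_inv_mul]
  calc _ ≤ ∫⁻ σ in Set.Ioc 0 (81 * a),
          2⁻¹ * (ENNReal.ofReal (|σ| ^ (-(1 / 2) : ℝ)) * ‖f σ‖ₑ ^ 2) := by
        rw [← lintegral_indicator measurableSet_Ioc]
        refine lintegral_mono fun σ => ?_
        rw [lintegral_mul_const' _ _ (by finiteness)]
        refine (mul_le_mul_left (setLIntegral_hardyKernel_left_le a σ) _).trans ?_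
        by_cases hσ : σ ∈ Set.Ioc 0 (81 * a)
        · rw [Set.indicator_of_mem hσ, Set.indicator_of_mem hσ, ← mul_assoc, hquarter, mul_assoc]
        · simp [Set.indicator_of_notMem hσ]
    _ = 2⁻¹ * ((∫⁻ σ in Set.Ioc 0 a, ENNReal.ofReal (|σ| ^ (-(1 / 2) : ℝ)) * ‖f σ‖ₑ ^ 2)
          + ∫⁻ σ in Set.Ioc a (81 * a), ENNReal.ofReal (|σ| ^ (-(1 / 2) : ℝ)) * ‖f σ‖ₑ ^ 2) := by
        rw [lintegral_const_mul _ (by fun_prop), hsplit, lintegral_union measurableSet_Ioc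
          (Set.Ioc_disjoint_Ioc_of_le le_rfl)]
    _ ≤ _ := by
        rw [mul_add]
        gcongr
        · linarith
        · rw [← lintegral_const_mul _ (by fun_prop)]
          refine (setLIntegral_mono (by fun_prop) fun σ hσ => ?_).trans
            (lintegral_mono_set (Set.Ioc_subset_Ioc_left ha.le))
          gcongr ?_ * _
          rw [abs_of_pos (ha.trans hσ.1)]
          exact ENNReal.ofReal_le_ofReal
            (Real.rpow_le_rpow_of_nonpos ha hσ.1.le (by norm_num))

lemma lintegral_hardyKernel_mul_sub_le (hf : Continuous f) :
    ∫⁻ t in Set.Ioc (-a) a, ∫⁻ σ, hardyKernel t σ * (2 * ‖f σ - f t‖ₑ ^ 2)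
      ≤ 2000 * ∫⁻ h, ENNReal.ofReal (|h| ^ (-(3 / 2) : ℝ)) *
          ∫⁻ t in Set.Ioc (-a) a, ‖f (t + h) - f t‖ₑ ^ 2 := by
  have hmeas : Measurable fun p : ℝ × ℝ => ‖f (p.1 + p.2) - f p.1‖ₑ ^ 2 :=
    Continuous.measurable (by fun_prop)
  calc _ ≤ ∫⁻ t in Set.Ioc (-a) a, ∫⁻ σ, 1000 * ENNReal.ofReal (|σ - t| ^ (-(3 / 2) : ℝ))
          * (2 * ‖f σ - f t‖ₑ ^ 2) := by
        gcongr with t σ; exact hardyKernel_le t σ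
    _ = ∫⁻ t in Set.Ioc (-a) a, ∫⁻ h, 1000 * ENNReal.ofReal (|h| ^ (-(3 / 2) : ℝ))
          * (2 * ‖f (t + h) - f t‖ₑ ^ 2) := lintegral_congr fun t => by
        rw [← lintegral_add_left_eq_self _ t]
        simp only [add_sub_cancel_left]
    _ = ∫⁻ h, ∫⁻ t in Set.Ioc (-a) a, 1000 * ENNReal.ofReal (|h| ^ (-(3 / 2) : ℝ))
          * (2 * ‖f (t + h) - f t‖ₑ ^ 2) := by
        refine lintegral_lintegral_swap (Measurable.aemeasurable ?_)
        simp only [Function.uncurry_def]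
        fun_prop
    _ = _ := by
        rw [← lintegral_const_mul' _ _ (by simp)]
        refine lintegral_congr fun h => ?_
        rw [lintegral_const_mul' _ _ (by finiteness), lintegral_const_mul' _ _ (by simp)]
        ring

theorem lintegral_abs_rpow_mul_enorm_sq_le (hf : Continuous f) (ha : 0 < a) :
    ∫⁻ t in Set.Ioc (-a) a, ENNReal.ofReal (|t| ^ (-(1 / 2) : ℝ)) * ‖f t‖ₑ ^ 2
      ≤ ENNReal.ofReal (a ^ (-(1 / 2) : ℝ)) * (∫⁻ σ in Set.Ioc 0 (81 * a), ‖f σ‖ₑ ^ 2)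
        + 4000 * ∫⁻ h, ENNReal.ofReal (|h| ^ (-(3 / 2) : ℝ)) *
            ∫⁻ t in Set.Ioc (-a) a, ‖f (t + h) - f t‖ₑ ^ 2 := by
  set I := ∫⁻ t in Set.Ioc (-a) a, ENNReal.ofReal (|t| ^ (-(1 / 2) : ℝ)) * ‖f t‖ₑ ^ 2
  set X := ENNReal.ofReal (a ^ (-(1 / 2) : ℝ)) * ∫⁻ σ in Set.Ioc 0 (81 * a), ‖f σ‖ₑ ^ 2
  set Z := ∫⁻ h, ENNReal.ofReal (|h| ^ (-(3 / 2) : ℝ)) *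
    ∫⁻ t in Set.Ioc (-a) a, ‖f (t + h) - f t‖ₑ ^ 2
  have hI : I ≠ ⊤ := lintegral_abs_rpow_mul_enorm_sq_ne_top hf ha
  have hcompare : I ≤ ∫⁻ t in Set.Ioc (-a) a, ∫⁻ σ,
      (hardyKernel t σ * (2 * ‖f σ‖ₑ ^ 2) + hardyKernel t σ * (2 * ‖f σ - f t‖ₑ ^ 2)) := by
    refine lintegral_mono_ae ?_
    filter_upwards [ae_restrict_of_ae (Measure.ae_ne volume (0 : ℝ))] with t ht
    rw [← lintegral_hardyKernel_right ht, ← lintegral_mul_const' _ _ (by finiteness)]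
    gcongr with σ
    rw [← mul_add]
    gcongr
    exact enorm_sq_le_two_mul_add _ _
  have hmeas := measurable_hardyKernel_mul_enorm_sq hf
  have hsum : I ≤ I / 2 + (X / 2 + 2000 * Z) := by
    rw [← add_assoc]
    refine hcompare.trans ?_
    refine le_trans (le_of_eq ?_) (add_le_add (lintegral_hardyKernel_mul_apply_le hf ha)
      (lintegral_hardyKernel_mul_sub_le hf))
    rw [← lintegral_add_left hmeas.lintegral_prod_right']
    exact lintegral_congr fun t => lintegral_add_left (hmeas.comp measurable_prodMk_left) _
  have hhalf : I / 2 ≤ X / 2 + 2000 * Z := by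
    refine (ENNReal.add_le_add_iff_left (ENNReal.div_ne_top hI two_ne_zero)).1 ?_
    rwa [ENNReal.add_halves]
  calc I = 2 * (I / 2) := (ENNReal.mul_div_cancel two_ne_zero ENNReal.ofNat_ne_top).symm
    _ ≤ 2 * (X / 2 + 2000 * Z) := by gcongr
    _ = X + 4000 * Z := by
        rw [mul_add, ENNReal.mul_div_cancel two_ne_zero ENNReal.ofNat_ne_top, ← mul_assoc]
        norm_num

end Hardy
section TrigonometricEstimates

/-- The squared homogeneous Sobolev norm `∑ |k|^{2σ} |c_k|²` of a trigonometric polynomial. -/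
def trigEnergy (σ : ℝ) (S : Finset ℤ) (c : ℤ → ℂ) : ℝ :=
  ∑ k ∈ S, |(k : ℝ)| ^ (2 * σ) * ‖c k‖ ^ 2

lemma trigEnergy_nonneg (σ : ℝ) (S : Finset ℤ) (c : ℤ → ℂ) : 0 ≤ trigEnergy σ S c :=
  Finset.sum_nonneg fun _ _ => by positivity

lemma rpow_mul_norm_derivCoeff_sq {σ : ℝ} (hσ : 0 ≤ σ) (c : ℤ → ℂ) (k : ℤ) :
    |(k : ℝ)| ^ (2 * σ) * ‖derivCoeff c k‖ ^ 2 = |(k : ℝ)| ^ (2 * (σ + 1)) * ‖c k‖ ^ 2 := by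
  rw [norm_derivCoeff, mul_pow, ← mul_assoc, mul_add, mul_one,
    rpow_add_of_nonneg (abs_nonneg _) (by positivity) zero_le_two, rpow_two]

lemma trigEnergy_derivCoeff {σ : ℝ} (hσ : 0 ≤ σ) (S : Finset ℤ) (c : ℤ → ℂ) :
    trigEnergy σ S (derivCoeff c) = trigEnergy (σ + 1) S c :=
  Finset.sum_congr rfl fun k _ => rpow_mul_norm_derivCoeff_sq hσ c k

lemma sum_norm_sq_le_trigEnergy {σ : ℝ} {d : ℤ → ℂ} (hσ : 0 ≤ σ) (hd : d 0 = 0) (S : Finset ℤ) :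
    ∑ k ∈ S, ‖d k‖ ^ 2 ≤ trigEnergy σ S d := by
  refine Finset.sum_le_sum fun k _ => ?_
  rcases eq_or_ne k 0 with rfl | hk
  · simp [hd]
  · exact le_mul_of_one_le_left (sq_nonneg _) (one_le_rpow (mod_cast Int.one_le_abs hk)
      (by positivity))

lemma lintegral_enorm_trigPoly_sq (N : ℕ) (S : Finset ℤ) (c : ℤ → ℂ) :
    ∫⁻ s in Set.Ioc (-(N * π)) (N * π), ‖trigPoly S c s‖ₑ ^ 2
      = ENNReal.ofReal (2 * (N * π) * ∑ k ∈ S, ‖c k‖ ^ 2) := by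
  rw [← integral_norm_trigPoly_sq, intervalIntegral.integral_of_le (neg_le_self (by positivity)),
    ofReal_integral_eq_lintegral_ofReal (Continuous.integrableOn_Ioc (by fun_prop))
      (Eventually.of_forall fun _ => sq_nonneg _)]
  simp only [ENNReal.ofReal_pow (norm_nonneg _), ofReal_norm]

lemma lintegral_enorm_trigPoly_sq_period (S : Finset ℤ) (c : ℤ → ℂ) :
    ∫⁻ s in Set.Ioc (-π) π, ‖trigPoly S c s‖ₑ ^ 2
      = ENNReal.ofReal (2 * π * ∑ k ∈ S, ‖c k‖ ^ 2) := by
  simpa using lintegral_enorm_trigPoly_sq 1 S c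

lemma lintegral_abs_rpow_mul_trigPoly_sq_le {S : Finset ℤ} {b : ℝ → ℤ → ℂ} {d : ℤ → ℂ}
    (hb : ∀ h k, ‖b h k‖ ≤ ‖d k‖ * min 2 (|(k : ℝ)| * |h|)) :
    ∫⁻ h, ENNReal.ofReal (|h| ^ (-(3 / 2) : ℝ)) * ∫⁻ s in Set.Ioc (-π) π, ‖trigPoly S (b h) s‖ₑ ^ 2
      ≤ ENNReal.ofReal (36 * π * trigEnergy (1 / 4) S d) := by
  have hpt : ∀ h : ℝ, ENNReal.ofReal (|h| ^ (-(3 / 2) : ℝ))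
        * ∫⁻ s in Set.Ioc (-π) π, ‖trigPoly S (b h) s‖ₑ ^ 2
      ≤ ∑ k ∈ S, ENNReal.ofReal (2 * π * ‖d k‖ ^ 2)
        * ENNReal.ofReal (|h| ^ (-(3 / 2) : ℝ) * min 2 (|(k : ℝ)| * |h|) ^ 2) := fun h => by
    simp_rw [lintegral_enorm_trigPoly_sq_period,
      ← ENNReal.ofReal_mul (show 0 ≤ 2 * π * ‖d _‖ ^ 2 by positivity)]
    rw [← ENNReal.ofReal_mul (by positivity),
      ← ENNReal.ofReal_sum_of_nonneg fun k _ => by positivity, Finset.mul_sum, Finset.mul_sum]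
    refine ENNReal.ofReal_le_ofReal (Finset.sum_le_sum fun k _ => ?_)
    calc |h| ^ (-(3 / 2) : ℝ) * (2 * π * ‖b h k‖ ^ 2)
        ≤ |h| ^ (-(3 / 2) : ℝ) * (2 * π * (‖d k‖ * min 2 (|(k : ℝ)| * |h|)) ^ 2) := by
          gcongr; exact hb h k
      _ = 2 * π * ‖d k‖ ^ 2 * (|h| ^ (-(3 / 2) : ℝ) * min 2 (|(k : ℝ)| * |h|) ^ 2) := by ring
  refine (lintegral_mono hpt).trans ?_
  rw [lintegral_finsetSum _ fun k _ => by fun_prop, trigEnergy, Finset.mul_sum,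
    ENNReal.ofReal_sum_of_nonneg fun k _ => by positivity]
  refine Finset.sum_le_sum fun k _ => ?_
  rw [lintegral_const_mul _ (by fun_prop)]
  calc ENNReal.ofReal (2 * π * ‖d k‖ ^ 2)
        * ∫⁻ h, ENNReal.ofReal (|h| ^ (-(3 / 2) : ℝ) * min 2 (|(k : ℝ)| * |h|) ^ 2)
      ≤ ENNReal.ofReal (2 * π * ‖d k‖ ^ 2) * ENNReal.ofReal (18 * |(k : ℝ)| ^ (1 / 2 : ℝ)) := by
        gcongr; exact lintegral_abs_rpow_mul_min_sq_le (abs_nonneg _)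
    _ = ENNReal.ofReal (36 * π * (|(k : ℝ)| ^ (2 * (1 / 4) : ℝ) * ‖d k‖ ^ 2)) := by
        rw [← ENNReal.ofReal_mul (by positivity)]; congr 1; ring_nf

lemma norm_expMode_sub_one_le (k : ℤ) (t : ℝ) : ‖expMode k t - 1‖ ≤ min 2 (|(k : ℝ)| * |t|) := by
  refine le_min ((norm_sub_le _ _).trans_eq (by norm_num)) ?_
  have h := Real.norm_exp_I_mul_ofReal_sub_one_le (x := k * t)
  rwa [Complex.ofReal_mul, Complex.ofReal_intCast, ← mul_assoc, norm_mul] at h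

lemma norm_expMode_sub_one_le_rpow {α : ℝ} (hα : 0 ≤ α) (hα₁ : α ≤ 1) (k : ℤ) (t : ℝ) :
    ‖expMode k t - 1‖ ≤ 2 * (|(k : ℝ)| ^ α * |t| ^ α) := by
  refine (norm_expMode_sub_one_le k t).trans ?_
  rw [← mul_rpow (abs_nonneg _) (abs_nonneg _)]
  have hx : 0 ≤ |(k : ℝ)| * |t| := by positivity
  rcases le_total (|(k : ℝ)| * |t|) 1 with h | h
  · linarith [min_le_right 2 (|(k : ℝ)| * |t|), rpow_nonneg hx α, self_le_rpow_of_le_one hx h hα₁]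
  · linarith [min_le_left 2 (|(k : ℝ)| * |t|), one_le_rpow h hα]

lemma lintegral_abs_rpow_mul_trigPoly_le {S : Finset ℤ} {d : ℤ → ℂ} (hd : d 0 = 0) :
    ∫⁻ t in Set.Ioc (-π) π, ENNReal.ofReal (|t| ^ (-(1 / 2) : ℝ)) * ‖trigPoly S d t‖ₑ ^ 2
      ≤ ENNReal.ofReal (150000 * π * trigEnergy (1 / 4) S d) := by
  have hE := trigEnergy_nonneg (1 / 4) S d
  have hweight : ENNReal.ofReal (π ^ (-(1 / 2) : ℝ)) ≤ 1 :=
    ENNReal.ofReal_le_one.2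
      (rpow_le_one_of_one_le_of_nonpos (by linarith [two_le_pi]) (by norm_num))
  have hmass : ∫⁻ σ in Set.Ioc 0 (81 * π), ‖trigPoly S d σ‖ₑ ^ 2
      ≤ ENNReal.ofReal (162 * π * trigEnergy (1 / 4) S d) := by
    calc ∫⁻ σ in Set.Ioc 0 (81 * π), ‖trigPoly S d σ‖ₑ ^ 2
        ≤ ∫⁻ σ in Set.Ioc (-((81 : ℕ) * π)) ((81 : ℕ) * π), ‖trigPoly S d σ‖ₑ ^ 2 :=
          lintegral_mono_set (Set.Ioc_subset_Ioc (neg_nonpos.2 (by positivity)) (by norm_num))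
      _ = ENNReal.ofReal (162 * π * ∑ k ∈ S, ‖d k‖ ^ 2) := by
          rw [lintegral_enorm_trigPoly_sq]; congr 1; push_cast; ring
      _ ≤ ENNReal.ofReal (162 * π * trigEnergy (1 / 4) S d) := by
          gcongr; exact sum_norm_sq_le_trigEnergy (by norm_num) hd S
  have hdiff : ∀ h k, ‖d k * expMode k h - d k‖ ≤ ‖d k‖ * min 2 (|(k : ℝ)| * |h|) := fun h k => by
    rw [← mul_sub_one, norm_mul]
    gcongr; exact norm_expMode_sub_one_le k h
  have hGagliardo := lintegral_abs_rpow_mul_trigPoly_sq_le (S := S) hdiff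
  simp only [← trigPoly_sub_trigPoly, ← trigPoly_add_right] at hGagliardo
  calc ∫⁻ t in Set.Ioc (-π) π, ENNReal.ofReal (|t| ^ (-(1 / 2) : ℝ)) * ‖trigPoly S d t‖ₑ ^ 2
      ≤ 1 * ENNReal.ofReal (162 * π * trigEnergy (1 / 4) S d)
        + 4000 * ENNReal.ofReal (36 * π * trigEnergy (1 / 4) S d) := by
        refine (lintegral_abs_rpow_mul_enorm_sq_le (continuous_trigPoly S d) pi_pos).trans ?_
        gcongr
    _ = ENNReal.ofReal (144162 * (π * trigEnergy (1 / 4) S d)) := by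
        rw [one_mul, ← ENNReal.ofReal_ofNat 4000, ← ENNReal.ofReal_mul (by norm_num),
          ← ENNReal.ofReal_add (by positivity) (by positivity)]
        congr 1; ring
    _ ≤ ENNReal.ofReal (150000 * π * trigEnergy (1 / 4) S d) := by
        rw [mul_assoc]; gcongr; norm_num

lemma lintegral_abs_rpow_mul_trigPoly_add_le {S : Finset ℤ} {d : ℤ → ℂ} (hd : d 0 = 0) (s : ℝ) :
    ∫⁻ t in Set.Ioc (-π) π, ENNReal.ofReal (|t| ^ (-(1 / 2) : ℝ)) * ‖trigPoly S d (s + t)‖ₑ ^ 2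
      ≤ ENNReal.ofReal (150000 * π * trigEnergy (1 / 4) S d) := by
  have h := lintegral_abs_rpow_mul_trigPoly_le (S := S) (d := fun k => d k * expMode k s)
    (by simp [hd])
  simpa only [← trigPoly_add_right, trigEnergy, norm_mul, norm_expMode, mul_one, add_comm] using h

lemma norm_weightedAvg_le {φ : ℝ → ℝ} {f : ℝ → ℂ} {s t C : ℝ} (hφ : Continuous φ)
    (hφ₀ : ∀ u ∈ Set.Ioc (0 : ℝ) 1, 0 ≤ φ u)
    (hf : ∀ u ∈ Set.Ioc (0 : ℝ) 1, ‖f (s + u * t)‖ ≤ C) :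
    ‖weightedAvg φ f s t‖ ≤ (∫ u in (0 : ℝ)..1, φ u) * C := by
  rw [← intervalIntegral.integral_mul_const]
  refine intervalIntegral.norm_integral_le_of_norm_le zero_le_one (ae_of_all _ fun u hu => ?_)
    (Continuous.intervalIntegrable (by fun_prop) _ _)
  rw [norm_smul, Real.norm_of_nonneg (hφ₀ u hu)]
  exact mul_le_mul_of_nonneg_left (hf u hu) (hφ₀ u hu)

lemma norm_avg_le {f : ℝ → ℂ} {C : ℝ} (hf : ∀ x, ‖f x‖ ≤ C) (s t : ℝ) : ‖avg f s t‖ ≤ C := by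
  simpa using norm_weightedAvg_le (φ := fun _ => 1) (s := s) (t := t) continuous_const
    (fun _ _ => zero_le_one) fun u _ => hf (s + u * t)

lemma integral_two_mul_one_sub : ∫ u in (0 : ℝ)..1, 2 * (1 - u) = 1 := by
  rw [intervalIntegral.integral_const_mul, intervalIntegral.integral_sub
    (Continuous.intervalIntegrable (by fun_prop) _ _)
    (Continuous.intervalIntegrable (by fun_prop) _ _)]
  norm_num

lemma sub_two_mul_headAvg {f : ℝ → ℂ} (hf : Continuous f) (s t : ℝ) :
    f s - 2 * headAvg f s t = weightedAvg (fun u => 2 * (1 - u)) (fun x => f s - f x) s t := by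
  have hmass : ∫ u in (0 : ℝ)..1, ((2 * (1 - u) : ℝ) : ℂ) = 1 := by
    rw [intervalIntegral.integral_ofReal, integral_two_mul_one_sub, Complex.ofReal_one]
  simp only [weightedAvg, smul_sub, Complex.real_smul]
  rw [intervalIntegral.integral_sub (Continuous.intervalIntegrable (by fun_prop) _ _)
    (Continuous.intervalIntegrable (by fun_prop) _ _), intervalIntegral.integral_mul_const, hmass,
    one_mul, ← intervalIntegral.integral_const_mul]
  push_cast
  simp only [mul_assoc]

lemma norm_one_sub_two_mul_headAvg_expMode_le (k : ℤ) (t : ℝ) :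
    ‖1 - 2 * headAvg (expMode k) 0 t‖ ≤ min 2 (|(k : ℝ)| * |t|) := by
  have hzero : expMode k 0 = 1 := by simp [expMode]
  have hbound : ∀ u ∈ Set.Ioc (0 : ℝ) 1,
      ‖expMode k 0 - expMode k (0 + u * t)‖ ≤ min 2 (|(k : ℝ)| * |t|) := fun u hu => by
    rw [norm_sub_rev, zero_add, hzero]
    refine (norm_expMode_sub_one_le k (u * t)).trans ?_
    rw [abs_mul, abs_of_pos hu.1]
    gcongr
    exact mul_le_of_le_one_left (abs_nonneg t) hu.2
  have h := norm_weightedAvg_le (φ := fun u => 2 * (1 - u))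
    (f := fun x => expMode k 0 - expMode k x) (by fun_prop) (fun u hu => by linarith [hu.2]) hbound
  rwa [integral_two_mul_one_sub, one_mul, ← sub_two_mul_headAvg (continuous_expMode k), hzero] at h

lemma headAvg_trigPoly (S : Finset ℤ) (d : ℤ → ℂ) (s t : ℝ) :
    headAvg (trigPoly S d) s t = trigPoly S (fun k => d k * headAvg (expMode k) 0 t) s := by
  simp only [weightedAvg, trigPoly, Finset.smul_sum]
  rw [intervalIntegral.integral_finsetSum
    fun k _ => Continuous.intervalIntegrable (by fun_prop) _ _]
  refine Finset.sum_congr rfl fun k _ => ?_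
  rw [← intervalIntegral.integral_const_mul, ← intervalIntegral.integral_mul_const]
  refine intervalIntegral.integral_congr fun u _ => ?_
  simp only [expMode_add, zero_add, Complex.real_smul]
  ring

lemma lintegral_abs_rpow_mul_sub_two_mul_headAvg_le (S : Finset ℤ) (d : ℤ → ℂ) :
    ∫⁻ t, ENNReal.ofReal (|t| ^ (-(3 / 2) : ℝ)) * ∫⁻ s in Set.Ioc (-π) π,
        ‖trigPoly S d s - 2 * headAvg (trigPoly S d) s t‖ₑ ^ 2
      ≤ ENNReal.ofReal (36 * π * trigEnergy (1 / 4) S d) := by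
  have hcoeff : ∀ s t, trigPoly S d s - 2 * headAvg (trigPoly S d) s t
      = trigPoly S (fun k => d k * (1 - 2 * headAvg (expMode k) 0 t)) s := fun s t => by
    rw [headAvg_trigPoly]
    simp only [trigPoly, Finset.mul_sum, ← Finset.sum_sub_distrib]
    exact Finset.sum_congr rfl fun k _ => by ring
  simp only [hcoeff]
  refine lintegral_abs_rpow_mul_trigPoly_sq_le fun t k => ?_
  rw [norm_mul]
  gcongr
  exact norm_one_sub_two_mul_headAvg_expMode_le k t

end TrigonometricEstimates
section RemainderEstimate

open scoped ComplexConjugate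

/-- The well-stretched condition with constant `lam` for a curve `Y` on a circle of length `2π`. -/
def WellStretched {E : Type*} [NormedAddCommGroup E] (Y : ℝ → E) (lam : ℝ) : Prop :=
  ∀ s₁ s₂ : ℝ, |s₁ - s₂| ≤ π → lam * |s₁ - s₂| ≤ ‖Y s₁ - Y s₂‖

lemma WellStretched.le_norm_avg {Y y : ℝ → ℂ} {lam : ℝ} (hY : WellStretched Y lam)
    (hy : Continuous y) (hd : ∀ s, HasDerivAt Y (y s) s) (s : ℝ) {t : ℝ}
    (ht : t ∈ Set.Icc (-π) π) : lam ≤ ‖avg y s t‖ := by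
  have hne : ∀ t ∈ Set.Icc (-π) π, t ≠ 0 → lam ≤ ‖avg y s t‖ := fun t ht ht₀ => by
    have h := hY (s + t) s (by simpa [abs_le] using ht)
    rw [← smul_avg_deriv hy hd, norm_smul, add_sub_cancel_left, Real.norm_eq_abs, mul_comm] at h
    exact le_of_mul_le_mul_left h (abs_pos.2 ht₀)
  rcases eq_or_ne t 0 with rfl | ht₀
  · have hcont : Continuous fun t => ‖avg y s t‖ := by fun_prop
    refine ge_of_tendsto ((hcont.tendsto 0).mono_left (nhdsWithin_le_nhds (s := {0}ᶜ))) ?_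
    filter_upwards [nhdsWithin_le_nhds (Icc_mem_nhds (neg_lt_zero.2 pi_pos) pi_pos),
      self_mem_nhdsWithin] with t ht ht₀ using hne t ht ht₀
  · exact hne t ht ht₀

lemma WellStretched.smoothLoop_trigPoly {S : Finset ℤ} {c : ℤ → ℂ} {lam : ℝ} (hlam : 0 < lam)
    (hY : WellStretched (trigPoly S c) lam) :
    SmoothLoop (trigPoly S c) (trigPoly S (derivCoeff c)) (trigPoly S (derivCoeff (derivCoeff c)))
      (trigPoly S (derivCoeff (derivCoeff (derivCoeff c)))) where
  periodic := periodic_trigPoly S c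
  hasDerivAt₁ := hasDerivAt_trigPoly S c
  hasDerivAt₂ := hasDerivAt_trigPoly S _
  hasDerivAt₃ := hasDerivAt_trigPoly S _
  continuous₃ := continuous_trigPoly S _
  avg_ne_zero s _ ht := norm_pos_iff.1 <| hlam.trans_le <|
    hY.le_norm_avg (continuous_trigPoly S _) (hasDerivAt_trigPoly S c) s ht

lemma norm_avg_sub_le {f : ℝ → ℂ} {s M α : ℝ} (hf : Continuous f) (hα : 0 ≤ α)
    (hM : ∀ t, ‖f (s + t) - f s‖ ≤ M * |t| ^ α) (t : ℝ) : ‖avg f s t - f s‖ ≤ M * |t| ^ α := by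
  have hM₀ : 0 ≤ M := by simpa using (norm_nonneg _).trans (hM 1)
  have hdiff : avg f s t - f s = avg (fun x => f x - f s) s t := by
    simp only [weightedAvg, one_smul]
    rw [intervalIntegral.integral_sub (Continuous.intervalIntegrable (by fun_prop) _ _)
      (Continuous.intervalIntegrable (by fun_prop) _ _)]
    simp
  rw [hdiff]
  refine (norm_weightedAvg_le continuous_const (fun _ _ => zero_le_one) fun u hu =>
    (hM (u * t)).trans (?_ : _ ≤ M * |t| ^ α)).trans_eq (by simp)
  rw [abs_mul, abs_of_pos hu.1]
  gcongr
  exacts [mul_nonneg hu.1.le (abs_nonneg t), mul_le_of_le_one_left (abs_nonneg t) hu.2]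

lemma norm_headAvg_le_rpow {f f' : ℝ → ℂ} {s t M α : ℝ} (hf' : Continuous f')
    (hd : ∀ s, HasDerivAt f (f' s) s) (hα : 0 ≤ α)
    (hM : ∀ t, ‖f (s + t) - f s‖ ≤ M * |t| ^ α) (ht : t ≠ 0) :
    ‖headAvg f' s t‖ ≤ M * |t| ^ (α - 1) := by
  have hf : Continuous f := continuous_iff_continuousAt.2 fun s => (hd s).continuousAt
  have hbound := norm_avg_sub_le hf hα hM t
  rw [← smul_headAvg_deriv hf' hd, norm_smul, Real.norm_eq_abs] at hbound
  rwa [rpow_sub_one (abs_ne_zero.2 ht), ← mul_div_assoc, le_div_iff₀' (abs_pos.2 ht)]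

lemma norm_mul_add_conj_div_two_le (a b : ℂ) : ‖a * (b + conj b) / 2‖ ≤ ‖a‖ * ‖b‖ := by
  rw [norm_div, norm_mul, Complex.norm_two, mul_div_assoc]
  gcongr
  linarith [norm_add_le b (conj b), RCLike.norm_conj b]

lemma norm_conj_mul_sub_mul_conj_le (a b : ℂ) : ‖conj a * b - a * conj b‖ ≤ 2 * (‖a‖ * ‖b‖) :=
  (norm_sub_le _ _).trans_eq (by simp only [norm_mul, RCLike.norm_conj, two_mul])

lemma norm_sum_conj_mul_sub_mul_conj_le {M : ℝ} {l y z m q : ℂ} (hy : ‖y‖ ≤ M) (hl : ‖l‖ ≤ M) :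
    ‖-(conj y * (conj y * q - y * conj q)) + (conj z * m - z * conj m) * conj y
        + (conj z * l - z * conj l) * conj m‖ ≤ 2 * M * (M * ‖q‖) + 4 * M * (‖z‖ * ‖m‖) := by
  have hM : 0 ≤ M := (norm_nonneg _).trans hy
  calc _ ≤ M * (2 * (M * ‖q‖)) + 2 * (‖z‖ * ‖m‖) * M + 2 * (‖z‖ * M) * ‖m‖ := by
        refine norm_add₃_le.trans ?_
        rw [norm_neg, norm_mul, norm_mul (_ - _), norm_mul (_ - _), RCLike.norm_conj,
          RCLike.norm_conj]
        gcongr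
        · exact (norm_conj_mul_sub_mul_conj_le _ _).trans (by gcongr)
        · exact norm_conj_mul_sub_mul_conj_le _ _
        · exact (norm_conj_mul_sub_mul_conj_le _ _).trans (by gcongr)
    _ = 2 * M * (M * ‖q‖) + 4 * M * (‖z‖ * ‖m‖) := by ring

lemma norm_mul_add_mul_sub_mul_inv_sq_le {M lam : ℝ} {l y z m q : ℂ} (hlam : 0 < lam)
    (hy : ‖y‖ ≤ M) (hlow : lam ≤ ‖l‖) (hup : ‖l‖ ≤ M) :
    ‖(y * q + m * (z - m)) * l⁻¹ ^ 2‖ ≤ (M * ‖q‖ + ‖m‖ * (‖z‖ + ‖m‖)) * (M / lam ^ 3) := by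
  have hM : 0 ≤ M := (norm_nonneg _).trans hy
  have hnum : ‖y * q + m * (z - m)‖ ≤ M * ‖q‖ + ‖m‖ * (‖z‖ + ‖m‖) := by
    refine (norm_add_le _ _).trans ?_
    rw [norm_mul, norm_mul]
    gcongr
    exact norm_sub_le _ _
  have hinv : ‖l‖⁻¹ ^ 2 ≤ M / lam ^ 3 :=
    calc ‖l‖⁻¹ ^ 2 ≤ lam⁻¹ ^ 2 := by gcongr
      _ = lam / lam ^ 3 := by field_simp
      _ ≤ M / lam ^ 3 := by gcongr; exact hlow.trans hup
  rw [norm_mul, norm_pow, norm_inv]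
  gcongr

variable {y z : ℝ → ℂ} {s t M lam : ℝ}

lemma norm_secondRemainder_le (hlam : 0 < lam) (hy : ‖y s‖ ≤ M) (hlow : lam ≤ ‖avg y s t‖)
    (hup : ‖avg y s t‖ ≤ M) :
    ‖secondRemainder y z s t‖ ≤ ‖z (s + t)‖ * (M / lam ^ 3 *
      (2 * M * (‖z s - 2 * headAvg z s t‖ / |t|) + 3 * ‖z s‖ * ‖headAvg z s t‖
        + ‖headAvg z s t‖ ^ 2)) := by
  have hM : 0 ≤ M := (norm_nonneg _).trans hy
  set l := avg y s t
  set m := headAvg z s t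
  set q := (z s - 2 * m) / t with hq
  set a := (y s * q + m * (z s - m)) * l⁻¹ ^ 2 with ha
  set b := -(conj (y s) * (conj (y s) * q - y s * conj q))
    + (conj (z s) * m - z s * conj m) * conj (y s)
    + (conj (z s) * l - z s * conj l) * conj m with hb
  have hsplit : secondRemainder y z s t
      = z (s + t) * (a + conj a) / 2 + conj (z (s + t)) * b * conj l⁻¹ ^ 3 / 2 := by
    simp only [secondRemainder, ha, hb, hq, map_mul, map_add, map_sub, map_pow, map_div₀,
      Complex.conj_ofReal]
    ring
  have hqnorm : ‖q‖ = ‖z s - 2 * m‖ / |t| := by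
    rw [norm_div, Complex.norm_real, Real.norm_eq_abs]
  have hinv : ‖l⁻¹‖ ≤ lam⁻¹ := by rw [norm_inv]; exact inv_anti₀ hlam hlow
  have hfirst : ‖a‖ ≤ (M * ‖q‖ + ‖m‖ * (‖z s‖ + ‖m‖)) * (M / lam ^ 3) :=
    norm_mul_add_mul_sub_mul_inv_sq_le hlam hy hlow hup
  have hsecond : ‖conj (z (s + t)) * b * conj l⁻¹ ^ 3 / 2‖
      ≤ ‖z (s + t)‖ * (2 * M * (M * ‖q‖) + 4 * M * (‖z s‖ * ‖m‖)) * lam⁻¹ ^ 3 / 2 := by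
    rw [norm_div, norm_mul, norm_mul, norm_pow, RCLike.norm_conj, RCLike.norm_conj,
      Complex.norm_two]
    gcongr
    exact norm_sum_conj_mul_sub_mul_conj_le hy hup
  rw [hsplit, ← hqnorm]
  calc ‖z (s + t) * (a + conj a) / 2 + conj (z (s + t)) * b * conj l⁻¹ ^ 3 / 2‖
      ≤ ‖z (s + t)‖ * ((M * ‖q‖ + ‖m‖ * (‖z s‖ + ‖m‖)) * (M / lam ^ 3))
        + ‖z (s + t)‖ * (2 * M * (M * ‖q‖) + 4 * M * (‖z s‖ * ‖m‖)) * lam⁻¹ ^ 3 / 2 := by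
        refine (norm_add_le _ _).trans (add_le_add ?_ hsecond)
        exact (norm_mul_add_conj_div_two_le _ _).trans (by gcongr)
    _ = ‖z (s + t)‖ * (M / lam ^ 3 * (2 * M * ‖q‖ + 3 * ‖z s‖ * ‖m‖ + ‖m‖ ^ 2)) := by
        rw [inv_pow]; ring

lemma norm_secondRemainder_sq_le (hlam : 0 < lam) (hy : ‖y s‖ ≤ M) (hlow : lam ≤ ‖avg y s t‖)
    (hup : ‖avg y s t‖ ≤ M) (hm : ‖headAvg z s t‖ ≤ M * |t| ^ (-(5 / 16) : ℝ)) (ht : t ≠ 0) :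
    ‖secondRemainder y z s t‖ ^ 2 ≤ |t| ^ (-(1 / 2) : ℝ) * ‖z (s + t)‖ ^ 2 *
      (3 * (M / lam ^ 3) ^ 2 * (4 * M ^ 2 * (|t| ^ (-(3 / 2) : ℝ) * ‖z s - 2 * headAvg z s t‖ ^ 2)
        + 9 * M ^ 2 * ‖z s‖ ^ 2 * |t| ^ (-(1 / 8) : ℝ) + M ^ 4 * |t| ^ (-(3 / 4) : ℝ))) := by
  have ht' : 0 < |t| := abs_pos.2 ht
  have hM : 0 ≤ M := (norm_nonneg _).trans hy
  have hexp₁ : |t| ^ (-(1 / 2) : ℝ) * |t| ^ (-(3 / 2) : ℝ) = (|t|⁻¹) ^ 2 := by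
    rw [← rpow_add ht', ← rpow_neg_one, ← rpow_mul_natCast ht'.le]; norm_num
  have hexp₂ : |t| ^ (-(1 / 2) : ℝ) * |t| ^ (-(1 / 8) : ℝ) = (|t| ^ (-(5 / 16) : ℝ)) ^ 2 := by
    rw [← rpow_add ht', ← rpow_mul_natCast ht'.le]; norm_num
  have hexp₃ : |t| ^ (-(1 / 2) : ℝ) * |t| ^ (-(3 / 4) : ℝ) = (|t| ^ (-(5 / 16) : ℝ)) ^ 4 := by
    rw [← rpow_add ht', ← rpow_mul_natCast ht'.le]; norm_num
  have hsum : ∀ a b c : ℝ, (a + b + c) ^ 2 ≤ 3 * (a ^ 2 + b ^ 2 + c ^ 2) := fun a b c => by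
    nlinarith [sq_nonneg (a - b), sq_nonneg (b - c), sq_nonneg (a - c)]
  calc ‖secondRemainder y z s t‖ ^ 2
      ≤ (‖z (s + t)‖ * (M / lam ^ 3 * (2 * M * (‖z s - 2 * headAvg z s t‖ / |t|)
          + 3 * ‖z s‖ * (M * |t| ^ (-(5 / 16) : ℝ)) + (M * |t| ^ (-(5 / 16) : ℝ)) ^ 2))) ^ 2 := by
        gcongr
        refine (norm_secondRemainder_le hlam hy hlow hup).trans ?_
        gcongr
    _ ≤ (‖z (s + t)‖ * (M / lam ^ 3)) ^ 2 * (3 * ((2 * M * (‖z s - 2 * headAvg z s t‖ / |t|)) ^ 2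
          + (3 * ‖z s‖ * (M * |t| ^ (-(5 / 16) : ℝ))) ^ 2
          + ((M * |t| ^ (-(5 / 16) : ℝ)) ^ 2) ^ 2)) := by
        rw [← mul_assoc, mul_pow]
        gcongr
        exact hsum _ _ _
    _ = ‖z (s + t)‖ ^ 2 * (3 * (M / lam ^ 3) ^ 2 *
          (4 * M ^ 2 * (‖z s - 2 * headAvg z s t‖ ^ 2 * (|t|⁻¹) ^ 2)
          + 9 * M ^ 2 * ‖z s‖ ^ 2 * (|t| ^ (-(5 / 16) : ℝ)) ^ 2
          + M ^ 4 * (|t| ^ (-(5 / 16) : ℝ)) ^ 4)) := by ring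
    _ = _ := by rw [← hexp₁, ← hexp₂, ← hexp₃]; ring

end RemainderEstimate
section RemainderL2

variable {y z : ℝ → ℂ} {s M lam : ℝ}

lemma enorm_secondRemainder_sq_le {t : ℝ} (hlam : 0 < lam) (hy : ‖y s‖ ≤ M)
    (hlow : lam ≤ ‖avg y s t‖) (hup : ‖avg y s t‖ ≤ M)
    (hm : ‖headAvg z s t‖ ≤ M * |t| ^ (-(5 / 16) : ℝ)) (ht : t ≠ 0) :
    ‖secondRemainder y z s t‖ₑ ^ 2 ≤ ENNReal.ofReal (|t| ^ (-(1 / 2) : ℝ)) * ‖z (s + t)‖ₑ ^ 2 *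
      (ENNReal.ofReal (3 * (M / lam ^ 3) ^ 2) * (ENNReal.ofReal (4 * M ^ 2) *
          (ENNReal.ofReal (|t| ^ (-(3 / 2) : ℝ)) * ‖z s - 2 * headAvg z s t‖ₑ ^ 2)
        + ENNReal.ofReal (9 * M ^ 2) * ‖z s‖ₑ ^ 2 * ENNReal.ofReal (|t| ^ (-(1 / 8) : ℝ))
        + ENNReal.ofReal (M ^ 4) * ENNReal.ofReal (|t| ^ (-(3 / 4) : ℝ)))) := by
  have hM : 0 ≤ M := (norm_nonneg _).trans hy
  have h := ENNReal.ofReal_le_ofReal (norm_secondRemainder_sq_le hlam hy hlow hup hm ht)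
  simp only [← ofReal_norm, ← ENNReal.ofReal_pow (norm_nonneg _)]
  repeat rw [← ENNReal.ofReal_mul (by positivity)]
  repeat rw [← ENNReal.ofReal_add (by positivity) (by positivity)]
  repeat rw [← ENNReal.ofReal_mul (by positivity)]
  exact h

lemma lintegral_abs_rpow_le {a : ℝ} (ha : -1 < a) (ha₀ : a ≤ 0) :
    ∫⁻ t in Set.Ioc (-π) π, ENNReal.ofReal (|t| ^ a) ≤ ENNReal.ofReal (2 * (π / (a + 1))) := by
  rw [lintegral_abs_rpow ha pi_pos.le]
  have hpos : 0 < a + 1 := by linarith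
  gcongr
  exact rpow_le_self_of_one_le (by linarith [pi_gt_three]) (by linarith)

lemma enorm_integral_secondRemainder_sq_le (hz : Continuous z) (hd : ∀ x, HasDerivAt y (z x) x)
    (hlam : 0 < lam) (hM : ∀ x, ‖y x‖ ≤ M) (hlow : ∀ t ∈ Set.Icc (-π) π, lam ≤ ‖avg y s t‖)
    (hhol : ∀ t, ‖y (s + t) - y s‖ ≤ M * |t| ^ (11 / 16 : ℝ)) :
    ‖∫ t in (-π)..π, secondRemainder y z s t‖ₑ ^ 2 ≤
      (∫⁻ t in Set.Ioc (-π) π, ENNReal.ofReal (|t| ^ (-(1 / 2) : ℝ)) * ‖z (s + t)‖ₑ ^ 2) *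
      (ENNReal.ofReal (3 * (M / lam ^ 3) ^ 2) * (ENNReal.ofReal (4 * M ^ 2) *
          (∫⁻ t, ENNReal.ofReal (|t| ^ (-(3 / 2) : ℝ)) * ‖z s - 2 * headAvg z s t‖ₑ ^ 2)
        + ENNReal.ofReal (9 * M ^ 2) * ‖z s‖ₑ ^ 2 * ENNReal.ofReal (3 * π)
        + ENNReal.ofReal (M ^ 4) * ENNReal.ofReal (8 * π))) := by
  have hmeas : Measurable z := hz.measurable
  have hmeas' : Measurable (headAvg z s) :=
    Continuous.measurable (by fun_prop)
  calc _ ≤ (∫⁻ t in Set.Ioc (-π) π, ‖secondRemainder y z s t‖ₑ) ^ 2 := by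
        rw [intervalIntegral.integral_of_le (by linarith [pi_pos])]
        gcongr
        exact enorm_integral_le_lintegral_enorm _
    _ ≤ _ := by
        refine sq_lintegral_le_of_sq_le
          (f := fun t => ENNReal.ofReal (|t| ^ (-(1 / 2) : ℝ)) * ‖z (s + t)‖ₑ ^ 2)
          (g := fun t => ENNReal.ofReal (3 * (M / lam ^ 3) ^ 2) * (ENNReal.ofReal (4 * M ^ 2) *
            (ENNReal.ofReal (|t| ^ (-(3 / 2) : ℝ)) * ‖z s - 2 * headAvg z s t‖ₑ ^ 2)
            + ENNReal.ofReal (9 * M ^ 2) * ‖z s‖ₑ ^ 2 * ENNReal.ofReal (|t| ^ (-(1 / 8) : ℝ))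
            + ENNReal.ofReal (M ^ 4) * ENNReal.ofReal (|t| ^ (-(3 / 4) : ℝ))))
          (by fun_prop) (by fun_prop) ?_
        filter_upwards [ae_restrict_of_ae (Measure.ae_ne volume (0 : ℝ)),
          ae_restrict_mem measurableSet_Ioc] with t ht hmem
        refine enorm_secondRemainder_sq_le hlam (hM s) (hlow t (Set.Ioc_subset_Icc_self hmem))
          (norm_avg_le hM s t) ?_ ht
        exact (norm_headAvg_le_rpow hz hd (by norm_num) hhol ht).trans_eq (by norm_num)
    _ ≤ _ := by
        rw [lintegral_const_mul' _ _ ENNReal.ofReal_ne_top, lintegral_add_left (by fun_prop),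
          lintegral_add_left (by fun_prop), lintegral_const_mul' _ _ ENNReal.ofReal_ne_top,
          lintegral_const_mul' _ _ (by finiteness), lintegral_const_mul' _ _ ENNReal.ofReal_ne_top]
        gcongr
        · exact Measure.restrict_le_self
        · exact (lintegral_abs_rpow_le (by norm_num) (by norm_num)).trans
            (ENNReal.ofReal_le_ofReal (by ring_nf; linarith [pi_pos]))
        · exact (lintegral_abs_rpow_le (by norm_num) (by norm_num)).trans_eq
            (by ring_nf)

lemma norm_trigPoly_le_sum_rpow {S : Finset ℤ} {d : ℤ → ℂ} {α : ℝ} (hd : d 0 = 0) (hα : 0 ≤ α)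
    (s : ℝ) : ‖trigPoly S d s‖ ≤ ∑ k ∈ S, |(k : ℝ)| ^ α * ‖d k‖ := by
  refine norm_sum_le_of_le _ fun k _ => ?_
  rcases eq_or_ne k 0 with rfl | hk
  · simp [hd]
  · have hk₁ : (1 : ℝ) ≤ |(k : ℝ)| := mod_cast Int.one_le_abs hk
    rw [norm_mul, norm_expMode, mul_one]
    exact le_mul_of_one_le_left (norm_nonneg _) (one_le_rpow hk₁ hα)

lemma norm_trigPoly_add_sub_le {α : ℝ} (hα : 0 ≤ α) (hα₁ : α ≤ 1) (S : Finset ℤ) (d : ℤ → ℂ)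
    (s t : ℝ) :
    ‖trigPoly S d (s + t) - trigPoly S d s‖ ≤ 2 * (∑ k ∈ S, |(k : ℝ)| ^ α * ‖d k‖) * |t| ^ α := by
  rw [trigPoly_add_right, trigPoly_sub_trigPoly, mul_assoc, Finset.sum_mul, Finset.mul_sum]
  refine norm_sum_le_of_le _ fun k _ => ?_
  calc ‖(d k * expMode k t - d k) * expMode k s‖ = ‖d k‖ * ‖expMode k t - 1‖ := by
        rw [norm_mul, norm_expMode, mul_one, ← mul_sub_one, norm_mul]
    _ ≤ ‖d k‖ * (2 * (|(k : ℝ)| ^ α * |t| ^ α)) := by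
        gcongr; exact norm_expMode_sub_one_le_rpow hα hα₁ k t
    _ = 2 * (|(k : ℝ)| ^ α * ‖d k‖ * |t| ^ α) := by ring

lemma sq_sum_rpow_mul_norm_le {α σ : ℝ} (hα : 0 < α) (hσ : α + 1 / 2 < σ) (S : Finset ℤ)
    (d : ℤ → ℂ) :
    (∑ k ∈ S, |(k : ℝ)| ^ α * ‖d k‖) ^ 2
      ≤ (∑' k : ℤ, |(k : ℝ)| ^ (-(2 * (σ - α)))) * trigEnergy σ S d := by
  have hsplit : ∀ k : ℤ, |(k : ℝ)| ^ α * ‖d k‖ = |(k : ℝ)| ^ (α - σ) * (|(k : ℝ)| ^ σ * ‖d k‖) :=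
    fun k => by
      rcases eq_or_ne k 0 with rfl | hk
      · simp [zero_rpow hα.ne', zero_rpow (by linarith : σ ≠ 0)]
      · rw [← mul_assoc, ← rpow_add (by positivity)]; simp
  have hsq : ∀ (k : ℤ) (a : ℝ), (|(k : ℝ)| ^ a) ^ 2 = |(k : ℝ)| ^ (2 * a) := fun k a => by
    rw [← rpow_mul_natCast (abs_nonneg _), mul_comm]; norm_num
  calc (∑ k ∈ S, |(k : ℝ)| ^ α * ‖d k‖) ^ 2
      ≤ (∑ k ∈ S, (|(k : ℝ)| ^ (α - σ)) ^ 2) * ∑ k ∈ S, (|(k : ℝ)| ^ σ * ‖d k‖) ^ 2 := by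
        simp only [hsplit]
        exact Finset.sum_mul_sq_le_sq_mul_sq _ _ _
    _ ≤ _ := by
        simp only [mul_pow, hsq, trigEnergy, show 2 * (α - σ) = -(2 * (σ - α)) by ring]
        gcongr
        exact (Real.summable_abs_int_rpow (by linarith)).sum_le_tsum S fun k _ => by positivity

lemma lintegral_lintegral_sub_two_mul_headAvg_le (S : Finset ℤ) (d : ℤ → ℂ) :
    ∫⁻ s in Set.Ioc (-π) π, ∫⁻ t, ENNReal.ofReal (|t| ^ (-(3 / 2) : ℝ)) *
        ‖trigPoly S d s - 2 * headAvg (trigPoly S d) s t‖ₑ ^ 2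
      ≤ ENNReal.ofReal (36 * π * trigEnergy (1 / 4) S d) := by
  have hz := continuous_trigPoly S d
  have hm : Measurable fun p : ℝ × ℝ => headAvg (trigPoly S d) p.1 p.2 :=
    Continuous.measurable (by fun_prop)
  rw [lintegral_lintegral_swap (Measurable.aemeasurable
    (by simp only [Function.uncurry_def]; fun_prop))]
  refine (lintegral_mono fun t => ?_).trans (lintegral_abs_rpow_mul_sub_two_mul_headAvg_le S d)
  rw [lintegral_const_mul' _ _ ENNReal.ofReal_ne_top]

lemma measurable_lintegral_sub_two_mul_headAvg {f : ℝ → ℂ} (hf : Continuous f) :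
    Measurable fun s => ∫⁻ t, ENNReal.ofReal (|t| ^ (-(3 / 2) : ℝ)) *
      ‖f s - 2 * headAvg f s t‖ₑ ^ 2 := by
  have hhead : Measurable fun p : ℝ × ℝ => headAvg f p.1 p.2 := Continuous.measurable (by fun_prop)
  exact Measurable.lintegral_prod_right (f := fun s t => ENNReal.ofReal (|t| ^ (-(3 / 2) : ℝ)) *
    ‖f s - 2 * headAvg f s t‖ₑ ^ 2) (by simp only [Function.uncurry_def]; fun_prop)

lemma lintegral_enorm_integral_secondRemainder_sq_le {S : Finset ℤ} {d : ℤ → ℂ} (hd : d 0 = 0)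
    (hlam : 0 < lam) (hlow : ∀ s, ∀ t ∈ Set.Icc (-π) π, lam ≤ ‖avg (trigPoly S d) s t‖)
    (hM : M = 2 * ∑ k ∈ S, |(k : ℝ)| ^ (11 / 16 : ℝ) * ‖d k‖) :
    ∫⁻ s in Set.Ioc (-π) π, ‖∫ t in (-π)..π,
        secondRemainder (trigPoly S d) (trigPoly S (derivCoeff d)) s t‖ₑ ^ 2
      ≤ ENNReal.ofReal (450000 * π * trigEnergy (5 / 4) S d * (M / lam ^ 3) ^ 2 *
        (144 * π * M ^ 2 * trigEnergy (5 / 4) S d + 54 * π ^ 2 * M ^ 2 * trigEnergy (5 / 4) S d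
          + 16 * π ^ 2 * M ^ 4)) := by
  have hM₀ : 0 ≤ M := hM ▸ by positivity
  have hd' : derivCoeff d 0 = 0 := by simp [derivCoeff]
  have henergy : trigEnergy (1 / 4) S (derivCoeff d) = trigEnergy (5 / 4) S d := by
    rw [trigEnergy_derivCoeff (by norm_num)]; norm_num
  have hB := trigEnergy_nonneg (5 / 4) S d
  have hz := continuous_trigPoly S (derivCoeff d)
  have hinner := measurable_lintegral_sub_two_mul_headAvg hz
  have hpointwise (s : ℝ) := enorm_integral_secondRemainder_sq_le hz (hasDerivAt_trigPoly S d) hlam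
    (fun x => (norm_trigPoly_le_sum_rpow hd (α := 11 / 16) (by norm_num) x).trans
      (by rw [hM]; linarith [show 0 ≤ ∑ k ∈ S, |(k : ℝ)| ^ (11 / 16 : ℝ) * ‖d k‖ by positivity]))
    (hlow s) (fun t => hM ▸ norm_trigPoly_add_sub_le (by norm_num) (by norm_num) S d s t)
  refine (lintegral_mono fun s => (hpointwise s).trans
    (mul_le_mul_left (lintegral_abs_rpow_mul_trigPoly_add_le hd' s) _)).trans ?_
  rw [lintegral_const_mul' _ _ ENNReal.ofReal_ne_top,
    lintegral_const_mul' _ _ ENNReal.ofReal_ne_top, lintegral_add_left (by fun_prop),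
    lintegral_add_left (by fun_prop),
    lintegral_const_mul' _ _ ENNReal.ofReal_ne_top, lintegral_mul_const' _ _ ENNReal.ofReal_ne_top,
    lintegral_const_mul' _ _ ENNReal.ofReal_ne_top, setLIntegral_const, Real.volume_Ioc,
    lintegral_enorm_trigPoly_sq_period]
  calc _ ≤ ENNReal.ofReal (150000 * π * trigEnergy (1 / 4) S (derivCoeff d)) *
        (ENNReal.ofReal (3 * (M / lam ^ 3) ^ 2) * (ENNReal.ofReal (4 * M ^ 2) *
          ENNReal.ofReal (36 * π * trigEnergy (1 / 4) S (derivCoeff d))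
        + ENNReal.ofReal (9 * M ^ 2) *
          ENNReal.ofReal (2 * π * trigEnergy (1 / 4) S (derivCoeff d)) * ENNReal.ofReal (3 * π)
        + ENNReal.ofReal (M ^ 4) * ENNReal.ofReal (8 * π) * ENNReal.ofReal (π - -π))) := by
        gcongr
        · exact lintegral_lintegral_sub_two_mul_headAvg_le S (derivCoeff d)
        · exact sum_norm_sq_le_trigEnergy (by norm_num) hd' S
    _ = _ := by
        have hπ : 0 ≤ π - -π := by linarith [pi_pos]
        rw [henergy]
        repeat rw [← ENNReal.ofReal_mul (by positivity)]
        repeat rw [← ENNReal.ofReal_add (by positivity) (by positivity)]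
        repeat rw [← ENNReal.ofReal_mul (by positivity)]
        ring_nf

theorem exists_lintegral_enorm_integral_secondRemainder_sq_le :
    ∃ C : ℝ, 0 ≤ C ∧ ∀ (S : Finset ℤ) (d : ℤ → ℂ) (lam : ℝ), d 0 = 0 → 0 < lam →
      (∀ s, ∀ t ∈ Set.Icc (-π) π, lam ≤ ‖avg (trigPoly S d) s t‖) →
      ∫⁻ s in Set.Ioc (-π) π, ‖∫ t in (-π)..π,
          secondRemainder (trigPoly S d) (trigPoly S (derivCoeff d)) s t‖ₑ ^ 2
        ≤ ENNReal.ofReal (C * (trigEnergy (5 / 4) S d ^ 4 / lam ^ 6)) := by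
  set K : ℝ := ∑' k : ℤ, |(k : ℝ)| ^ (-(2 * (5 / 4 - 11 / 16)) : ℝ)
  have hK₀ : 0 ≤ K := tsum_nonneg fun k => by positivity
  refine ⟨450000 * π * (4 * K) *
      (144 * π * (4 * K) + 54 * π ^ 2 * (4 * K) + 16 * π ^ 2 * (4 * K) ^ 2),
    by positivity, fun S d lam hd hlam hlow => ?_⟩
  refine (lintegral_enorm_integral_secondRemainder_sq_le hd hlam hlow rfl).trans
    (ENNReal.ofReal_le_ofReal ?_)
  set M := 2 * ∑ k ∈ S, |(k : ℝ)| ^ (11 / 16 : ℝ) * ‖d k‖ with hM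
  have hB := trigEnergy_nonneg (5 / 4) S d
  set B := trigEnergy (5 / 4) S d
  have hMsq : M ^ 2 ≤ 4 * K * B := by
    rw [hM, mul_pow, mul_assoc]
    norm_num only
    gcongr
    exact sq_sum_rpow_mul_norm_le (by norm_num) (by norm_num) S d
  calc _ = 450000 * π * B * (M ^ 2 / lam ^ 6) *
        (144 * π * M ^ 2 * B + 54 * π ^ 2 * M ^ 2 * B + 16 * π ^ 2 * (M ^ 2) ^ 2) := by ring
    _ ≤ 450000 * π * B * (4 * K * B / lam ^ 6) * (144 * π * (4 * K * B) * B
        + 54 * π ^ 2 * (4 * K * B) * B + 16 * π ^ 2 * (4 * K * B) ^ 2) := by gcongr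
    _ = _ := by ring

end RemainderL2

section RegularKernel

/-- The difference between the kernel `1 / t²` on the line and its `2π`-periodisation
`1 / (4 sin² (t / 2))`; it is bounded, and its value at `t = 0` is the junk value `0`. -/
def kernelGap (t : ℝ) : ℝ := 1 / t ^ 2 - 1 / (4 * Real.sin (t / 2) ^ 2)

@[fun_prop]
lemma measurable_kernelGap : Measurable kernelGap := by unfold kernelGap; fun_prop

lemma kernelGap_neg (t : ℝ) : kernelGap (-t) = kernelGap t := by
  rw [kernelGap, kernelGap, neg_sq, neg_div, Real.sin_neg, neg_sq]

lemma sq_sub_sin_sq_le {x : ℝ} (hx : 0 < x) (hx' : x ≤ π / 2) :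
    x ^ 2 - Real.sin x ^ 2 ≤ 4 / 3 * (x ^ 2 * Real.sin x ^ 2) := by
  have hsin_le : Real.sin x ≤ x := Real.sin_le hx.le
  have hsin_ge : x / 2 ≤ Real.sin x := by
    refine le_trans ?_ (Real.mul_le_sin hx.le hx')
    rw [div_mul_eq_mul_div, div_le_div_iff₀ (by norm_num) pi_pos]
    nlinarith [Real.pi_lt_four]
  calc x ^ 2 - Real.sin x ^ 2 = (x - Real.sin x) * (x + Real.sin x) := by ring
    _ ≤ (x ^ 3 / 6) * (2 * x) := by
        gcongr
        exacts [by linarith, by linarith [Real.sin_ge_sub_cube hx.le], by linarith]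
    _ = 4 / 3 * (x ^ 2 * (x / 2) ^ 2) := by ring
    _ ≤ 4 / 3 * (x ^ 2 * Real.sin x ^ 2) := by gcongr

lemma abs_kernelGap_le {t : ℝ} (ht : |t| ≤ π) : |kernelGap t| ≤ 1 := by
  wlog hpos : 0 < t generalizing t
  · rcases (not_lt.1 hpos).eq_or_lt with rfl | hneg
    · simp [kernelGap]
    · rw [← kernelGap_neg]
      exact this (by rwa [abs_neg]) (neg_pos.2 hneg)
  rw [abs_of_pos hpos] at ht
  obtain ⟨x, rfl⟩ : ∃ x, t = 2 * x := ⟨t / 2, by ring⟩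
  have hx : 0 < x := by linarith
  have hsin : 0 < Real.sin x := Real.sin_pos_of_pos_of_lt_pi hx (by linarith)
  have hgap : kernelGap (2 * x)
      = -((x ^ 2 - Real.sin x ^ 2) / (4 * (x ^ 2 * Real.sin x ^ 2))) := by
    rw [kernelGap, mul_div_cancel_left₀ x two_ne_zero]
    field_simp
    ring
  have hnonneg : 0 ≤ x ^ 2 - Real.sin x ^ 2 :=
    sub_nonneg.2 (pow_le_pow_left₀ hsin.le (Real.sin_le hx.le) 2)
  rw [hgap, abs_neg, abs_of_nonneg (by positivity), div_le_one (by positivity)]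
  linarith [sq_sub_sin_sq_le hx (by linarith), (by positivity : 0 ≤ x ^ 2 * Real.sin x ^ 2)]

lemma intervalIntegrable_kernelGap_mul {f : ℝ → ℂ} (hf : Continuous f) :
    IntervalIntegrable (fun t => (kernelGap t : ℂ) * f t) volume (-π) π := by
  rw [intervalIntegrable_iff_integrableOn_Ioc_of_le (neg_le_self pi_nonneg)]
  refine Integrable.bdd_mul (c := 1)
    (hf.integrableOn_Icc.mono_set Set.Ioc_subset_Icc_self) (by fun_prop) ?_
  filter_upwards [ae_restrict_mem measurableSet_Ioc] with t ht
  rw [Complex.norm_real]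
  exact abs_kernelGap_le (abs_le.2 (Set.Ioc_subset_Icc_self ht))

/-- The Fourier multiplier of the operator `f ↦ ∫ kernelGap t (f (s + t) - f s) dt`. -/
def gapMultiplier (k : ℤ) : ℂ := ∫ t in (-π)..π, (kernelGap t : ℂ) * (expMode k t - 1)

lemma norm_gapMultiplier_le (k : ℤ) : ‖gapMultiplier k‖ ≤ 4 * π := by
  have hbound : ∀ t ∈ Set.uIoc (-π) π, ‖(kernelGap t : ℂ) * (expMode k t - 1)‖ ≤ 2 := by
    intro t ht
    rw [Set.uIoc_of_le (neg_le_self pi_nonneg)] at ht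
    rw [norm_mul, Complex.norm_real, Real.norm_eq_abs]
    exact (mul_le_mul (abs_kernelGap_le (abs_le.2 (Set.Ioc_subset_Icc_self ht)))
      ((norm_expMode_sub_one_le k t).trans (min_le_left _ _)) (norm_nonneg _)
      zero_le_one).trans_eq (one_mul 2)
  refine (intervalIntegral.norm_integral_le_of_norm_le_const hbound).trans_eq ?_
  rw [sub_neg_eq_add, ← two_mul, abs_of_pos two_pi_pos]
  ring

lemma integral_kernelGap_mul_trigPoly_sub (S : Finset ℤ) (c : ℤ → ℂ) (s : ℝ) :
    ∫ t in (-π)..π, (kernelGap t : ℂ) * (trigPoly S c (s + t) - trigPoly S c s)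
      = trigPoly S (fun k => gapMultiplier k * c k) s := by
  have hsum : ∀ t, (kernelGap t : ℂ) * (trigPoly S c (s + t) - trigPoly S c s)
      = ∑ k ∈ S, c k * expMode k s * ((kernelGap t : ℂ) * (expMode k t - 1)) := fun t => by
    simp only [trigPoly, ← Finset.sum_sub_distrib, Finset.mul_sum, expMode_add]
    exact Finset.sum_congr rfl fun k _ => by ring
  simp only [hsum]
  rw [intervalIntegral.integral_finsetSum fun k _ =>
    (intervalIntegrable_kernelGap_mul (by fun_prop)).const_mul _]
  simp only [intervalIntegral.integral_const_mul, trigPoly, gapMultiplier]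
  exact Finset.sum_congr rfl fun k _ => by ring

end RegularKernel

section FourierCoefficients

/-- The normalised Fourier coefficient `(2π)⁻¹ ∫_{-π}^{π} f(s) e^{-iks} ds`. -/
def circleCoeff (f : ℝ → ℂ) (k : ℤ) : ℂ := fourierCoeffOn (neg_lt_self pi_pos) f k

lemma fourier_coe_eq_expMode {T : ℝ} (hT : T = 2 * π) (k : ℤ) (s : ℝ) :
    fourier k (s : AddCircle T) = expMode k s := by
  have hpi : (π : ℂ) ≠ 0 := Complex.ofReal_ne_zero.2 pi_ne_zero
  rw [fourier_coe_apply, expMode, hT]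
  congr 1
  push_cast
  field_simp

lemma circleCoeff_eq_integral (f : ℝ → ℂ) (k : ℤ) :
    circleCoeff f k = ((2 * π)⁻¹ : ℝ) * ∫ s in (-π)..π, f s * expMode (-k) s := by
  have hT : π - -π = 2 * π := by ring
  simp only [circleCoeff, fourierCoeffOn_eq_integral, fourier_coe_eq_expMode hT, smul_eq_mul,
    mul_comm (expMode _ _), Complex.real_smul]
  rw [hT, one_div]

lemma circleCoeff_deriv {f f' : ℝ → ℂ} (hf : Function.Periodic f (2 * π))
    (hd : ∀ s, HasDerivAt f (f' s) s) (hf' : Continuous f') (k : ℤ) :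
    circleCoeff f' k = derivCoeff (circleCoeff f) k := by
  have hpi : (π : ℂ) ≠ 0 := Complex.ofReal_ne_zero.2 pi_ne_zero
  have hint : IntervalIntegrable f' volume (-π) π := hf'.intervalIntegrable _ _
  have hends : f π = f (-π) := by rw [← hf (-π)]; ring_nf
  rcases eq_or_ne k 0 with rfl | hk
  · simp [circleCoeff_eq_integral, derivCoeff,
      intervalIntegral.integral_eq_sub_of_hasDerivAt (fun s _ => hd s) hint, hends]
  · have hk' : (k : ℂ) ≠ 0 := Int.cast_ne_zero.2 hk
    rw [derivCoeff, circleCoeff, circleCoeff,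
      fourierCoeffOn_of_hasDerivAt _ hk (fun s _ => hd s) hint, hends]
    push_cast
    field_simp
    ring

lemma sum_norm_circleCoeff_sq_le {f : ℝ → ℂ} (hf : Continuous f) (T : Finset ℤ) :
    ∑ k ∈ T, ‖circleCoeff f k‖ ^ 2 ≤ (2 * π)⁻¹ * ∫ s in (-π)..π, ‖f s‖ ^ 2 := by
  have hL2 : MemLp f 2 (volume.restrict (Set.Ioc (-π) π)) := by
    rw [memLp_two_iff_integrable_sq_norm hf.aestronglyMeasurable]
    exact (Continuous.integrableOn_Icc (by fun_prop)).mono_set Set.Ioc_subset_Icc_self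
  refine (sum_le_hasSum T (fun _ _ => by positivity)
    (hasSum_sq_fourierCoeffOn (neg_lt_self pi_pos) hL2)).trans_eq ?_
  rw [smul_eq_mul, sub_neg_eq_add, ← two_mul]

lemma hasSum_circleCoeff_mul_expMode {f : ℝ → ℂ} (hf : Continuous f)
    (hp : Function.Periodic f (2 * π)) (hs : Summable (circleCoeff f)) (s : ℝ) :
    HasSum (fun k => circleCoeff f k * expMode k s) (f s) := by
  have : Fact (0 < 2 * π) := ⟨two_pi_pos⟩
  let g : C(AddCircle (2 * π), ℂ) := ⟨hp.lift, continuous_coinduced_dom.mpr hf⟩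
  have hg : ∀ x : ℝ, g (x : AddCircle (2 * π)) = f x := hp.lift_coe
  have hcoeff : fourierCoeff g = circleCoeff f := by
    ext k
    rw [fourierCoeff_eq_intervalIntegral _ _ (-π), circleCoeff_eq_integral, Complex.real_smul,
      show -π + 2 * π = π by ring]
    simp only [hg, fourier_coe_eq_expMode rfl, smul_eq_mul, mul_comm (expMode _ _)]
    push_cast; rw [one_div]
  have hsum := has_pointwise_sum_fourier_series_of_summable (f := g) (hcoeff ▸ hs) s
  simpa only [hg, hcoeff, fourier_coe_eq_expMode rfl, smul_eq_mul] using hsum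

end FourierCoefficients

section ContourRemainder

open scoped ComplexConjugate

/-- The integrand of `4π g_Y` in complex notation: with `l` the difference quotient of `Y` and
`v = Y'(s + t)`, the quantity `-|v|² / |l|² + 2 (l · v)² / |l|⁴` is the real part of `(v / l)²`. -/
def contourIntegrand (Y y : ℝ → ℂ) (s t : ℝ) : ℂ :=
  let l := (t : ℂ)⁻¹ * (Y (s + t) - Y s)
  ((((y (s + t) / l) ^ 2).re - 1) / t : ℝ) * l + kernelGap t * (Y (s + t) - Y s)

/-- The function `4π g_Y` in complex notation. -/
def contourRemainder (Y y : ℝ → ℂ) (s : ℝ) : ℂ := ∫ t in (-π)..π, contourIntegrand Y y s t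

lemma contourIntegrand_eq_avg {Y y : ℝ → ℂ} {t : ℝ} (hy : Continuous y)
    (hd : ∀ s, HasDerivAt Y (y s) s) (s : ℝ) (ht : t ≠ 0) :
    contourIntegrand Y y s t = ((((y (s + t) / avg y s t) ^ 2).re - 1) / t : ℝ) * avg y s t
      + kernelGap t * (Y (s + t) - Y s) := by
  have hl : (t : ℂ)⁻¹ * (Y (s + t) - Y s) = avg y s t := by
    rw [← smul_avg_deriv hy hd, Complex.real_smul,
      inv_mul_cancel_left₀ (Complex.ofReal_ne_zero.2 ht)]
  rw [contourIntegrand, hl]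

lemma SmoothLoop.contourIntegrand_eq {Y y z w : ℝ → ℂ} {t : ℝ} (h : SmoothLoop Y y z w) (s : ℝ)
    (ht : t ∈ Set.Icc (-π) π) (ht₀ : t ≠ 0) :
    contourIntegrand Y y s t = nonlinKernel y z s t + kernelGap t * (Y (s + t) - Y s) := by
  have ht' : (t : ℂ) ≠ 0 := Complex.ofReal_ne_zero.2 ht₀
  have hl := h.avg_ne_zero s t ht
  have hl' : conj (avg y s t) ≠ 0 := (map_ne_zero _).2 hl
  rw [contourIntegrand_eq_avg h.continuous₁ h.hasDerivAt₁ s ht₀, nonlinKernel, h.apply_add_eq]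
  congr 1
  push_cast
  rw [Complex.re_eq_add_conj]
  simp only [map_pow, map_div₀, map_add, map_mul, map_inv₀, Complex.conj_ofReal]
  field_simp
  ring

lemma SmoothLoop.contourRemainder_eq {Y y z w : ℝ → ℂ} (h : SmoothLoop Y y z w) (s : ℝ) :
    contourRemainder Y y s = (∫ t in (-π)..π, nonlinKernel y z s t)
      + ∫ t in (-π)..π, (kernelGap t : ℂ) * (Y (s + t) - Y s) := by
  have hle : -π ≤ π := neg_le_self pi_nonneg
  have hY : Continuous Y := continuous_iff_continuousAt.2 fun s => (h.hasDerivAt₁ s).continuousAt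
  rw [contourRemainder, intervalIntegral_congr_of_ne_zero hle fun t => h.contourIntegrand_eq s]
  exact intervalIntegral.integral_add
    (intervalIntegrable_of_continuousOn_uncurry hle h.continuousOn_nonlinKernel s)
    (intervalIntegrable_kernelGap_mul (by fun_prop))

lemma periodic_contourRemainder {Y y : ℝ → ℂ} {T : ℝ} (hY : Function.Periodic Y T)
    (hy : Function.Periodic y T) : Function.Periodic (contourRemainder Y y) T := fun s => by
  simp only [contourRemainder, contourIntegrand, add_right_comm s T, hY _, hy _]

variable {S : Finset ℤ} {c : ℤ → ℂ} {lam : ℝ}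

/-- The function `contourRemainder` of the trigonometric polynomial with coefficients `c` at the
frequencies in `S`. -/
def trigRemainder (S : Finset ℤ) (c : ℤ → ℂ) : ℝ → ℂ :=
  contourRemainder (trigPoly S c) (trigPoly S (derivCoeff c))

/-- The coefficients of the part of the second derivative of `trigRemainder` that is linear in
the curve, for the trigonometric polynomial with coefficients `c`. -/
def linearPartCoeff (c : ℤ → ℂ) (k : ℤ) : ℂ :=
  (gapMultiplier k - 2 / π) * derivCoeff (derivCoeff c) k

/-- The second derivative of `trigRemainder`. -/
def trigRemainderDeriv₂ (S : Finset ℤ) (c : ℤ → ℂ) (s : ℝ) : ℂ :=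
  trigPoly S (linearPartCoeff c) s + ∫ t in (-π)..π, secondRemainder
    (trigPoly S (derivCoeff c)) (trigPoly S (derivCoeff (derivCoeff c))) s t

lemma continuous_trigRemainderDeriv₂ (hlam : 0 < lam) (hY : WellStretched (trigPoly S c) lam) :
    Continuous (trigRemainderDeriv₂ S c) :=
  (continuous_trigPoly _ _).add (hY.smoothLoop_trigPoly hlam).continuous_integral_secondRemainder

lemma circleCoeff_trigRemainderDeriv₂ (hlam : 0 < lam) (hY : WellStretched (trigPoly S c) lam)
    (k : ℤ) : circleCoeff (trigRemainderDeriv₂ S c) k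
      = derivCoeff (derivCoeff (circleCoeff (trigRemainder S c))) k := by
  have h := hY.smoothLoop_trigPoly hlam
  set c' : ℤ → ℂ := fun k => gapMultiplier k * c k with hc'
  have hG := h.contourRemainder_eq
  simp only [integral_kernelGap_mul_trigPoly_sub] at hG
  have hd₁ : ∀ s, HasDerivAt (trigRemainder S c) _ s :=
    fun s => ((h.hasDerivAt_integral_nonlinKernel s).add
      (hasDerivAt_trigPoly S c' s)).congr_of_eventuallyEq (.of_forall hG)
  have hd₂ := fun s => (h.hasDerivAt_deriv_integral_nonlinKernel s).add
    (hasDerivAt_trigPoly S (derivCoeff c') s)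
  have hper : Function.Periodic (trigRemainder S c) (2 * π) :=
    periodic_contourRemainder (periodic_trigPoly S c) (periodic_trigPoly S _)
  have hlinear : ∀ s, -(2 / π : ℂ) * trigPoly S (derivCoeff (derivCoeff c)) s
      + trigPoly S (derivCoeff (derivCoeff c')) s = trigPoly S (linearPartCoeff c) s := fun s => by
    simp only [trigPoly, Finset.mul_sum, ← Finset.sum_add_distrib]
    refine Finset.sum_congr rfl fun k _ => ?_
    simp only [linearPartCoeff, derivCoeff, hc']
    ring
  have hcont₁ := continuous_iff_continuousAt.2 fun s => (hd₂ s).continuousAt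
  have hd₂' : ∀ s, HasDerivAt _ (trigRemainderDeriv₂ S c s) s := fun s =>
    (hd₂ s).congr_deriv (by rw [trigRemainderDeriv₂, ← hlinear]; ring)
  rw [circleCoeff_deriv (periodic_of_hasDerivAt hper hd₁) hd₂'
    (continuous_trigRemainderDeriv₂ hlam hY), derivCoeff, circleCoeff_deriv hper hd₁ hcont₁,
    ← derivCoeff]

lemma WellStretched.sq_le_mul_trigEnergy (hlam : 0 < lam) (hY : WellStretched (trigPoly S c) lam) :
    lam ^ 2 ≤ (∑' k : ℤ, |(k : ℝ)| ^ (-(9 / 8) : ℝ)) * trigEnergy (9 / 4) S c := by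
  have hd₀ : derivCoeff c 0 = 0 := by simp [derivCoeff]
  have hle : lam ≤ ∑ k ∈ S, |(k : ℝ)| ^ (11 / 16 : ℝ) * ‖derivCoeff c k‖ :=
    (hY.le_norm_avg (continuous_trigPoly S _) (hasDerivAt_trigPoly S c) 0
      (t := 0) ⟨neg_nonpos.2 pi_nonneg, pi_nonneg⟩).trans
      (norm_avg_le (norm_trigPoly_le_sum_rpow hd₀ (by norm_num)) 0 0)
  have hsq := sq_sum_rpow_mul_norm_le (α := 11 / 16) (σ := 5 / 4) (by norm_num) (by norm_num) S
    (derivCoeff c)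
  rw [trigEnergy_derivCoeff (by norm_num)] at hsq
  norm_num only at hsq ⊢
  exact (pow_le_pow_left₀ hlam.le hle 2).trans hsq

lemma WellStretched.trigEnergy_le (hlam : 0 < lam) (hY : WellStretched (trigPoly S c) lam) :
    trigEnergy (9 / 4) S c ≤ (∑' k : ℤ, |(k : ℝ)| ^ (-(9 / 8) : ℝ)) ^ 3
      * (trigEnergy (9 / 4) S c ^ 4 / lam ^ 6) := by
  have hB := trigEnergy_nonneg (9 / 4) S c
  have hlamB := hY.sq_le_mul_trigEnergy hlam
  set K : ℝ := ∑' k : ℤ, |(k : ℝ)| ^ (-(9 / 8) : ℝ)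
  set B := trigEnergy (9 / 4) S c
  rw [← mul_div_assoc, le_div_iff₀ (by positivity)]
  calc B * lam ^ 6 = B * (lam ^ 2) ^ 3 := by ring
    _ ≤ B * (K * B) ^ 3 := by gcongr
    _ = K ^ 3 * B ^ 4 := by ring

lemma sum_norm_linearPartCoeff_sq_le (S : Finset ℤ) (c : ℤ → ℂ) :
    ∑ k ∈ S, ‖linearPartCoeff c k‖ ^ 2 ≤ (4 * π + 1) ^ 2 * trigEnergy (9 / 4) S c := by
  have hmult : ∀ k, ‖gapMultiplier k - 2 / π‖ ≤ 4 * π + 1 := fun k => by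
    refine (norm_sub_le _ _).trans (add_le_add (norm_gapMultiplier_le k) ?_)
    rw [norm_div, Complex.norm_two, Complex.norm_real, Real.norm_of_nonneg pi_nonneg,
      div_le_one pi_pos]
    linarith [pi_gt_three]
  have henergy : ∑ k ∈ S, ‖derivCoeff (derivCoeff c) k‖ ^ 2 ≤ trigEnergy (9 / 4) S c := by
    refine (sum_norm_sq_le_trigEnergy (σ := 1 / 4) (by norm_num)
      (by simp [derivCoeff]) S).trans_eq ?_
    rw [trigEnergy_derivCoeff (by norm_num), trigEnergy_derivCoeff (by norm_num)]
    norm_num only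
  calc _ ≤ ∑ k ∈ S, (4 * π + 1) ^ 2 * ‖derivCoeff (derivCoeff c) k‖ ^ 2 := by
        gcongr with k
        rw [linearPartCoeff, norm_mul, mul_pow]
        gcongr
        exact hmult k
    _ ≤ _ := by rw [← Finset.mul_sum]; gcongr

lemma exists_lintegral_enorm_trigRemainderDeriv₂_sq_le :
    ∃ C : ℝ, 0 < C ∧ ∀ (S : Finset ℤ) (c : ℤ → ℂ) (lam : ℝ), 0 < lam →
      WellStretched (trigPoly S c) lam →
      ∫⁻ s in Set.Ioc (-π) π, ‖trigRemainderDeriv₂ S c s‖ₑ ^ 2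
        ≤ ENNReal.ofReal (C * (trigEnergy (9 / 4) S c ^ 4 / lam ^ 6)) := by
  obtain ⟨C, hC, hremainder⟩ := exists_lintegral_enorm_integral_secondRemainder_sq_le
  set K : ℝ := ∑' k : ℤ, |(k : ℝ)| ^ (-(9 / 8) : ℝ)
  have hK : 0 ≤ K := tsum_nonneg fun k => by positivity
  refine ⟨2 * (2 * π * ((4 * π + 1) ^ 2 * K ^ 3) + C) + 1, by positivity,
    fun S c lam hlam hY => ?_⟩
  have hB := trigEnergy_nonneg (9 / 4) S c
  have hQ := hremainder S (derivCoeff c) lam (by simp [derivCoeff]) hlam fun s t ht =>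
    hY.le_norm_avg (continuous_trigPoly S _) (hasDerivAt_trigPoly S c) s ht
  have hlinear := sum_norm_linearPartCoeff_sq_le S c
  have hBB := hY.trigEnergy_le hlam
  rw [trigEnergy_derivCoeff (by norm_num), show (5 / 4 + 1 : ℝ) = 9 / 4 by norm_num] at hQ
  set B := trigEnergy (9 / 4) S c
  calc _ ≤ ∫⁻ s in Set.Ioc (-π) π, (2 * ‖trigPoly S (linearPartCoeff c) s‖ₑ ^ 2
          + 2 * ‖∫ t in (-π)..π, secondRemainder (trigPoly S (derivCoeff c))
            (trigPoly S (derivCoeff (derivCoeff c))) s t‖ₑ ^ 2) :=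
        lintegral_mono fun s => (enorm_sq_le_two_mul_add _ _).trans_eq (by
          rw [trigRemainderDeriv₂, sub_add_cancel_left, enorm_neg])
    _ ≤ 2 * ENNReal.ofReal (2 * π * ((4 * π + 1) ^ 2 * (K ^ 3 * (B ^ 4 / lam ^ 6))))
          + 2 * ENNReal.ofReal (C * (B ^ 4 / lam ^ 6)) := by
        have hmeas := (continuous_trigPoly S (linearPartCoeff c)).measurable
        rw [lintegral_add_left (by fun_prop), lintegral_const_mul' _ _ (by finiteness),
          lintegral_const_mul' _ _ (by finiteness), lintegral_enorm_trigPoly_sq_period]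
        gcongr
        exact hlinear.trans (by gcongr)
    _ = ENNReal.ofReal ((2 * (2 * π * ((4 * π + 1) ^ 2 * K ^ 3) + C)) * (B ^ 4 / lam ^ 6)) := by
        rw [← mul_add, ← ENNReal.ofReal_add (by positivity) (by positivity),
          ← ENNReal.ofReal_ofNat 2, ← ENNReal.ofReal_mul (by positivity)]
        ring_nf
    _ ≤ _ := by gcongr; linarith

theorem exists_sum_pow_four_mul_norm_circleCoeff_sq_le :
    ∃ C : ℝ, 0 < C ∧ ∀ (S : Finset ℤ) (c : ℤ → ℂ) (lam : ℝ), 0 < lam →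
      WellStretched (trigPoly S c) lam → ∀ T : Finset ℤ,
      ∑ k ∈ T, (k : ℝ) ^ 4 * ‖circleCoeff (trigRemainder S c) k‖ ^ 2
        ≤ C * (trigEnergy (9 / 4) S c ^ 4 / lam ^ 6) := by
  obtain ⟨C, hC, hL2⟩ := exists_lintegral_enorm_trigRemainderDeriv₂_sq_le
  refine ⟨(2 * π)⁻¹ * C, by positivity, fun S c lam hlam hY T => ?_⟩
  have hcont := continuous_trigRemainderDeriv₂ hlam hY
  have hB := trigEnergy_nonneg (9 / 4) S c
  calc _ = ∑ k ∈ T, ‖circleCoeff (trigRemainderDeriv₂ S c) k‖ ^ 2 := by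
        refine Finset.sum_congr rfl fun k _ => ?_
        rw [circleCoeff_trigRemainderDeriv₂ hlam hY, norm_derivCoeff, norm_derivCoeff, ← mul_assoc,
          mul_pow, ← sq, sq_abs]
        ring
    _ ≤ (2 * π)⁻¹ * ∫ s in (-π)..π, ‖trigRemainderDeriv₂ S c s‖ ^ 2 :=
        sum_norm_circleCoeff_sq_le hcont T
    _ ≤ (2 * π)⁻¹ * (C * (trigEnergy (9 / 4) S c ^ 4 / lam ^ 6)) := by
        gcongr
        rw [intervalIntegral.integral_of_le (neg_le_self pi_nonneg),
          integral_eq_lintegral_of_nonneg_ae (ae_of_all _ fun _ => sq_nonneg _) (by fun_prop)]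
        refine ENNReal.toReal_le_of_le_ofReal (by positivity) (le_trans (le_of_eq ?_)
          (hL2 S c lam hlam hY))
        simp only [ENNReal.ofReal_pow (norm_nonneg _), ofReal_norm]
    _ = _ := (mul_assoc _ _ _).symm

end ContourRemainder

section FourierApproximation

lemma abs_re_div_sq_sub_one_mul_norm_le (v : ℂ) {l : ℂ} (hl : l ≠ 0) :
    |((v / l) ^ 2).re - 1| * ‖l‖ ≤ ‖v - l‖ * ‖v + l‖ / ‖l‖ := by
  have hl' : ‖l‖ ≠ 0 := norm_ne_zero_iff.2 hl
  have hre := Complex.abs_re_le_norm ((v / l) ^ 2 - 1)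
  rw [Complex.sub_re, Complex.one_re] at hre
  refine (mul_le_mul_of_nonneg_right hre (norm_nonneg l)).trans_eq ?_
  rw [show (v / l) ^ 2 - 1 = (v - l) * (v + l) / l ^ 2 by field_simp; ring, norm_div, norm_mul,
    norm_pow]
  field_simp

lemma norm_contourIntegrand_le {Y y : ℝ → ℂ} {lam M N α s t : ℝ} (hlam : 0 < lam)
    (hY : WellStretched Y lam) (hy : Continuous y) (hd : ∀ s, HasDerivAt Y (y s) s) (hα : 0 ≤ α)
    (hN : ∀ x, ‖y x‖ ≤ N) (hM : ∀ t, ‖y (s + t) - y s‖ ≤ M * |t| ^ α)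
    (ht : t ∈ Set.Icc (-π) π) (ht₀ : t ≠ 0) :
    ‖contourIntegrand Y y s t‖ ≤ 4 * M * N / lam * |t| ^ (α - 1) + π * N := by
  have hl := hY.le_norm_avg hy hd s ht
  have hlN := norm_avg_le hN s t
  have hM₀ : 0 ≤ M := by simpa using (norm_nonneg _).trans (hM 1)
  have hN₀ : 0 ≤ N := (norm_nonneg _).trans hlN
  have ht' : 0 < |t| := abs_pos.2 ht₀
  have hsub : ‖y (s + t) - avg y s t‖ ≤ 2 * M * |t| ^ α := by
    rw [← sub_sub_sub_cancel_right _ _ (y s)]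
    linarith [norm_sub_le (y (s + t) - y s) (avg y s t - y s), hM t, norm_avg_sub_le hy hα hM t]
  have hadd : ‖y (s + t) + avg y s t‖ ≤ 2 * N := by
    linarith [norm_add_le (y (s + t)) (avg y s t), hN (s + t)]
  rw [contourIntegrand_eq_avg hy hd s ht₀, ← smul_avg_deriv hy hd]
  refine norm_add_le_of_le ?_ ?_
  · rw [norm_mul, Complex.norm_real, Real.norm_eq_abs, abs_div, div_mul_eq_mul_div]
    calc _ ≤ ‖y (s + t) - avg y s t‖ * ‖y (s + t) + avg y s t‖ / ‖avg y s t‖ / |t| := by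
          gcongr
          exact abs_re_div_sq_sub_one_mul_norm_le _ (norm_pos_iff.1 (hlam.trans_le hl))
      _ ≤ 2 * M * |t| ^ α * (2 * N) / lam / |t| := by gcongr
      _ = _ := by rw [rpow_sub_one ht'.ne']; ring
  · rw [norm_mul, norm_smul, Complex.norm_real, Real.norm_eq_abs, Real.norm_eq_abs]
    have htπ := abs_le.2 ht
    calc _ ≤ 1 * (π * N) := by gcongr; exact abs_kernelGap_le htπ
      _ = _ := one_mul _

lemma measurable_uncurry_contourIntegrand {Y y : ℝ → ℂ} (hY : Measurable Y) (hy : Measurable y) :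
    Measurable fun p : ℝ × ℝ => contourIntegrand Y y p.1 p.2 := by
  unfold contourIntegrand; fun_prop

lemma stronglyMeasurable_contourRemainder {Y y : ℝ → ℂ} (hY : Measurable Y) (hy : Measurable y) :
    StronglyMeasurable (contourRemainder Y y) := by
  have h := (measurable_uncurry_contourIntegrand hY hy).stronglyMeasurable
  unfold contourRemainder
  simp only [intervalIntegral.integral_of_le (neg_le_self pi_nonneg)]
  exact h.integral_prod_right

lemma intervalIntegrable_abs_rpow {a : ℝ} (ha : -1 < a) (ha₀ : a ≤ 0) :
    IntervalIntegrable (fun t => |t| ^ a) volume (-π) π := by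
  rw [intervalIntegrable_iff_integrableOn_Ioc_of_le (neg_le_self pi_nonneg)]
  refine ⟨Measurable.aestronglyMeasurable (by fun_prop), ?_⟩
  rw [hasFiniteIntegral_iff_ofReal (ae_of_all _ fun _ => by positivity)]
  exact (lintegral_abs_rpow_le ha ha₀).trans_lt ENNReal.ofReal_lt_top

/-- A `2π`-periodic well-stretched curve `Y` whose derivative `y` is Hölder continuous of exponent
`α` for the reason that its Fourier coefficients are summable against `|k| ^ α`. -/
structure HolderLoop (Y y : ℝ → ℂ) (lam α : ℝ) : Prop where
  periodic : Function.Periodic Y (2 * π)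
  hasDerivAt : ∀ s, HasDerivAt Y (y s) s
  lam_pos : 0 < lam
  wellStretched : WellStretched Y lam
  exponent_pos : 0 < α
  exponent_le_one : α ≤ 1
  summable_rpow_mul : Summable fun k : ℤ => |(k : ℝ)| ^ α * ‖derivCoeff (circleCoeff Y) k‖

lemma summable_rpow_mul_norm {d : ℤ → ℂ} {α σ : ℝ} (hα : 0 < α) (hσ : α + 1 / 2 < σ)
    (hd : Summable fun k : ℤ => |(k : ℝ)| ^ (2 * σ) * ‖d k‖ ^ 2) :
    Summable fun k : ℤ => |(k : ℝ)| ^ α * ‖d k‖ := by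
  refine summable_of_sum_le (fun _ => by positivity) fun S => Real.le_sqrt_of_sq_le <|
    (sq_sum_rpow_mul_norm_le hα hσ S d).trans (mul_le_mul_of_nonneg_left
      (hd.sum_le_tsum S fun _ _ => by positivity) (tsum_nonneg fun _ => by positivity))

namespace HolderLoop

variable {Y y : ℝ → ℂ} {lam α : ℝ}

lemma of_summable_energy (hper : Function.Periodic Y (2 * π)) (hd : ∀ s, HasDerivAt Y (y s) s)
    (hlam : 0 < lam) (hY : WellStretched Y lam)
    (hE : Summable fun k : ℤ => |(k : ℝ)| ^ (2 * (9 / 4) : ℝ) * ‖circleCoeff Y k‖ ^ 2) :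
    HolderLoop Y y lam (11 / 16) where
  periodic := hper
  hasDerivAt := hd
  lam_pos := hlam
  wellStretched := hY
  exponent_pos := by norm_num
  exponent_le_one := by norm_num
  summable_rpow_mul := by
    refine summable_rpow_mul_norm (σ := 5 / 4) (by norm_num) (by norm_num) (hE.congr fun k => ?_)
    rw [rpow_mul_norm_derivCoeff_sq (by norm_num)]
    norm_num only

lemma continuous (h : HolderLoop Y y lam α) : Continuous Y :=
  continuous_iff_continuousAt.2 fun s => (h.hasDerivAt s).continuousAt

lemma summable_derivCoeff (h : HolderLoop Y y lam α) :
    Summable fun k => ‖derivCoeff (circleCoeff Y) k‖ := by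
  refine .of_nonneg_of_le (fun _ => norm_nonneg _) (fun k => ?_) h.summable_rpow_mul
  rcases eq_or_ne k 0 with rfl | hk
  · simp [derivCoeff]
  · have hk₁ : (1 : ℝ) ≤ |(k : ℝ)| := mod_cast Int.one_le_abs hk
    exact le_mul_of_one_le_left (norm_nonneg _) (one_le_rpow hk₁ h.exponent_pos.le)

lemma summable_circleCoeff (h : HolderLoop Y y lam α) : Summable (circleCoeff Y) := by
  refine .of_norm_bounded_eventually h.summable_derivCoeff ?_
  filter_upwards [(Set.finite_singleton (0 : ℤ)).compl_mem_cofinite] with k hk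
  have hk₁ : (1 : ℝ) ≤ |(k : ℝ)| := mod_cast Int.one_le_abs hk
  rw [norm_derivCoeff]
  exact le_mul_of_one_le_left (norm_nonneg _) hk₁

lemma tendsto_trigPoly (h : HolderLoop Y y lam α) (s : ℝ) :
    Tendsto (fun S => trigPoly S (circleCoeff Y) s) atTop (𝓝 (Y s)) :=
  hasSum_circleCoeff_mul_expMode h.continuous h.periodic h.summable_circleCoeff s

lemma tsum_derivCoeff_mul_expMode (h : HolderLoop Y y lam α) (s : ℝ) :
    ∑' k, derivCoeff (circleCoeff Y) k * expMode k s = y s := by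
  have hY := hasSum_circleCoeff_mul_expMode h.continuous h.periodic h.summable_circleCoeff
  have hd := hasDerivAt_tsum (𝕜 := ℝ) (g := fun k s => circleCoeff Y k * expMode k s)
    (g' := fun k s => derivCoeff (circleCoeff Y) k * expMode k s) (y₀ := 0) h.summable_derivCoeff
    (fun k s => ((hasDerivAt_expMode k s).const_mul _).congr_deriv (by rw [derivCoeff]; ring))
    (fun k s => by simp) (hY 0).summable s
  rw [show (fun s => ∑' k, circleCoeff Y k * expMode k s) = Y from funext fun s => (hY s).tsum_eq]
    at hd
  exact hd.unique (h.hasDerivAt s)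

lemma tendstoUniformly_trigPoly_deriv (h : HolderLoop Y y lam α) :
    TendstoUniformly (fun S => trigPoly S (derivCoeff (circleCoeff Y))) y atTop := by
  have hunif := tendstoUniformly_tsum h.summable_derivCoeff
    (f := fun k s => derivCoeff (circleCoeff Y) k * expMode k s) fun k s => by simp
  rwa [funext h.tsum_derivCoeff_mul_expMode] at hunif

lemma continuous_deriv (h : HolderLoop Y y lam α) : Continuous y :=
  h.tendstoUniformly_trigPoly_deriv.continuous (.of_forall fun _ => continuous_trigPoly _ _)

lemma eventually_wellStretched_trigPoly (h : HolderLoop Y y lam α) :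
    ∀ᶠ S in atTop, WellStretched (trigPoly S (circleCoeff Y)) (lam / 2) := by
  filter_upwards [Metric.tendstoUniformly_iff.1 h.tendstoUniformly_trigPoly_deriv (lam / 2)
    (half_pos h.lam_pos)] with S hS s₁ s₂ hs
  have hdiff : ‖(Y s₁ - trigPoly S (circleCoeff Y) s₁) - (Y s₂ - trigPoly S (circleCoeff Y) s₂)‖
      ≤ lam / 2 * |s₁ - s₂| :=
    convex_univ.norm_image_sub_le_of_norm_hasDerivWithin_le
      (fun x _ => ((h.hasDerivAt x).sub (hasDerivAt_trigPoly S _ x)).hasDerivWithinAt)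
      (fun x _ => (dist_eq_norm (y x) _ ▸ hS x).le) (Set.mem_univ s₂) (Set.mem_univ s₁)
  have hY := h.wellStretched s₁ s₂ hs
  have htri := norm_sub_norm_le (Y s₁ - Y s₂)
    (trigPoly S (circleCoeff Y) s₁ - trigPoly S (circleCoeff Y) s₂)
  rw [sub_sub_sub_comm] at htri
  linarith

lemma tendsto_contourIntegrand (h : HolderLoop Y y lam α) (s : ℝ) {t : ℝ}
    (ht : t ∈ Set.Icc (-π) π) (ht₀ : t ≠ 0) :
    Tendsto (fun S => contourIntegrand (trigPoly S (circleCoeff Y))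
      (trigPoly S (derivCoeff (circleCoeff Y))) s t) atTop (𝓝 (contourIntegrand Y y s t)) := by
  have hl₀ : (t : ℂ)⁻¹ * (Y (s + t) - Y s) ≠ 0 := by
    refine mul_ne_zero (inv_ne_zero (Complex.ofReal_ne_zero.2 ht₀)) (norm_pos_iff.1 ?_)
    refine (mul_pos h.lam_pos (abs_pos.2 ht₀)).trans_le ?_
    simpa using h.wellStretched (s + t) s (by simpa [abs_le] using ht)
  have hdiff := (h.tendsto_trigPoly (s + t)).sub (h.tendsto_trigPoly s)
  have hl := hdiff.const_mul (t : ℂ)⁻¹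
  have hquot := ((h.tendstoUniformly_trigPoly_deriv.tendsto_at (s + t)).div hl hl₀).pow 2
  have hre := (((Complex.continuous_re.tendsto _).comp hquot).sub_const 1).div_const t
  exact (((Complex.continuous_ofReal.tendsto _).comp hre).mul hl).add (hdiff.const_mul _)

lemma exists_eventually_norm_contourIntegrand_le (h : HolderLoop Y y lam α) :
    ∃ g : ℝ → ℝ, IntervalIntegrable g volume (-π) π ∧ ∀ᶠ S in atTop, ∀ s,
      ∀ t ∈ Set.Ioc (-π) π, t ≠ 0 → ‖contourIntegrand (trigPoly S (circleCoeff Y))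
        (trigPoly S (derivCoeff (circleCoeff Y))) s t‖ ≤ g t := by
  set c := circleCoeff Y
  set A : ℝ := ∑' k : ℤ, |(k : ℝ)| ^ α * ‖derivCoeff c k‖
  have hA : ∀ S : Finset ℤ, ∑ k ∈ S, |(k : ℝ)| ^ α * ‖derivCoeff c k‖ ≤ A := fun S =>
    h.summable_rpow_mul.sum_le_tsum S fun _ _ => by positivity
  refine ⟨fun t => 4 * (2 * A) * A / (lam / 2) * |t| ^ (α - 1) + π * A, ?_, ?_⟩
  · exact (intervalIntegrable_abs_rpow (by linarith [h.exponent_pos])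
      (by linarith [h.exponent_le_one])).const_mul _ |>.add intervalIntegrable_const
  · filter_upwards [h.eventually_wellStretched_trigPoly] with S hS s t ht ht₀
    refine norm_contourIntegrand_le (half_pos h.lam_pos) hS (continuous_trigPoly _ _)
      (hasDerivAt_trigPoly S c) h.exponent_pos.le (fun x => ?_) (fun t => ?_)
      (Set.Ioc_subset_Icc_self ht) ht₀
    · exact (norm_trigPoly_le_sum_rpow (by simp [derivCoeff]) h.exponent_pos.le x).trans (hA S)
    · refine (norm_trigPoly_add_sub_le h.exponent_pos.le h.exponent_le_one S _ s t).trans ?_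
      gcongr
      exact hA S

lemma tendsto_trigRemainder (h : HolderLoop Y y lam α) (s : ℝ) :
    Tendsto (fun S => trigRemainder S (circleCoeff Y) s) atTop (𝓝 (contourRemainder Y y s)) := by
  obtain ⟨g, hg, hbound⟩ := h.exists_eventually_norm_contourIntegrand_le
  have hIoc : Set.uIoc (-π) π = Set.Ioc (-π) π := Set.uIoc_of_le (neg_le_self pi_nonneg)
  refine intervalIntegral.tendsto_integral_filter_of_dominated_convergence g ?_ ?_ hg ?_
  · refine .of_forall fun S => Measurable.aestronglyMeasurable ?_
    exact (measurable_uncurry_contourIntegrand (continuous_trigPoly _ _).measurable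
      (continuous_trigPoly _ _).measurable).of_uncurry_left
  · filter_upwards [hbound] with S hS
    filter_upwards [Measure.ae_ne volume (0 : ℝ)] with t ht₀ ht
    exact hS s t (hIoc ▸ ht) ht₀
  · filter_upwards [Measure.ae_ne volume (0 : ℝ)] with t ht₀ ht
    exact h.tendsto_contourIntegrand s (Set.Ioc_subset_Icc_self (hIoc ▸ ht)) ht₀

lemma exists_eventually_norm_trigRemainder_le (h : HolderLoop Y y lam α) :
    ∃ M : ℝ, ∀ᶠ S in atTop, ∀ s, ‖trigRemainder S (circleCoeff Y) s‖ ≤ M := by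
  obtain ⟨g, hg, hbound⟩ := h.exists_eventually_norm_contourIntegrand_le
  refine ⟨∫ t in (-π)..π, g t, ?_⟩
  filter_upwards [hbound] with S hS s
  refine intervalIntegral.norm_integral_le_of_norm_le (neg_le_self pi_nonneg) ?_ hg
  filter_upwards [Measure.ae_ne volume (0 : ℝ)] with t ht₀ ht using hS s t ht ht₀

lemma tendsto_circleCoeff_trigRemainder (h : HolderLoop Y y lam α) (k : ℤ) :
    Tendsto (fun S => circleCoeff (trigRemainder S (circleCoeff Y)) k) atTop
      (𝓝 (circleCoeff (contourRemainder Y y) k)) := by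
  obtain ⟨M, hM⟩ := h.exists_eventually_norm_trigRemainder_le
  simp only [circleCoeff_eq_integral (_ : ℝ → ℂ) k]
  refine Tendsto.const_mul _ ?_
  refine intervalIntegral.tendsto_integral_filter_of_dominated_convergence (fun _ => M) ?_ ?_
    intervalIntegrable_const (ae_of_all _ fun s _ => (h.tendsto_trigRemainder s).mul_const _)
  · refine .of_forall fun S => ((stronglyMeasurable_contourRemainder
      (continuous_trigPoly _ _).measurable (continuous_trigPoly _ _).measurable).mul
      (continuous_expMode _).stronglyMeasurable).aestronglyMeasurable
  · filter_upwards [hM] with S hS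
    refine ae_of_all _ fun s _ => ?_
    rw [norm_mul, norm_expMode, mul_one]
    exact hS s

lemma intervalIntegrable_contourRemainder (h : HolderLoop Y y lam α) :
    IntervalIntegrable (contourRemainder Y y) volume (-π) π := by
  obtain ⟨M, hM⟩ := h.exists_eventually_norm_trigRemainder_le
  refine (intervalIntegrable_const (c := M)).mono_fun' (stronglyMeasurable_contourRemainder
    h.continuous.measurable h.continuous_deriv.measurable).aestronglyMeasurable
    (ae_of_all _ fun s => le_of_tendsto (h.tendsto_trigRemainder s).norm ?_)
  filter_upwards [hM] with S hS using hS s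

end HolderLoop

theorem exists_tsum_rpow_mul_norm_circleCoeff_contourRemainder_sq_le :
    ∃ C : ℝ, 0 < C ∧ ∀ (Y y : ℝ → ℂ) (lam α : ℝ), HolderLoop Y y lam α →
      (Summable fun k : ℤ => |(k : ℝ)| ^ (2 * (9 / 4) : ℝ) * ‖circleCoeff Y k‖ ^ 2) →
      (Summable fun k : ℤ => |(k : ℝ)| ^ (2 * 2 : ℝ) * ‖circleCoeff (contourRemainder Y y) k‖ ^ 2) ∧
      ∑' k : ℤ, |(k : ℝ)| ^ (2 * 2 : ℝ) * ‖circleCoeff (contourRemainder Y y) k‖ ^ 2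
        ≤ C * ((∑' k : ℤ, |(k : ℝ)| ^ (2 * (9 / 4) : ℝ) * ‖circleCoeff Y k‖ ^ 2) ^ 4
          / lam ^ 6) := by
  obtain ⟨C, hC, hsmooth⟩ := exists_sum_pow_four_mul_norm_circleCoeff_sq_le
  refine ⟨64 * C, by positivity, fun Y y lam α h hE => ?_⟩
  have hlam := h.lam_pos
  have hES : ∀ S, trigEnergy (9 / 4) S (circleCoeff Y) ≤ _ :=
    fun S => hE.sum_le_tsum S fun _ _ => by positivity
  have hrpow : ∀ k : ℤ, |(k : ℝ)| ^ (2 * 2 : ℝ) = (k : ℝ) ^ 4 := fun k => by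
    rw [show (2 * 2 : ℝ) = (4 : ℕ) by norm_num, rpow_natCast, (by decide : Even 4).pow_abs]
  set B := ∑' k : ℤ, |(k : ℝ)| ^ (2 * (9 / 4) : ℝ) * ‖circleCoeff Y k‖ ^ 2
  have hsum : ∀ T : Finset ℤ, ∑ k ∈ T, |(k : ℝ)| ^ (2 * 2 : ℝ) *
      ‖circleCoeff (contourRemainder Y y) k‖ ^ 2 ≤ 64 * C * (B ^ 4 / lam ^ 6) := fun T => by
    refine le_of_tendsto (tendsto_finsetSum T fun k _ =>
      ((h.tendsto_circleCoeff_trigRemainder k).norm.pow 2).const_mul _) ?_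
    filter_upwards [h.eventually_wellStretched_trigPoly] with S hS
    have hES₀ := trigEnergy_nonneg (9 / 4) S (circleCoeff Y)
    simp only [hrpow]
    calc _ ≤ C * (trigEnergy (9 / 4) S (circleCoeff Y) ^ 4 / (lam / 2) ^ 6) :=
          hsmooth S _ _ (half_pos hlam) hS T
      _ ≤ C * (B ^ 4 / (lam / 2) ^ 6) := by gcongr; exact hES S
      _ = _ := by rw [div_pow]; field_simp; ring
  have hsummable := summable_of_sum_le (fun _ => by positivity) hsum
  exact ⟨hsummable, hsummable.tsum_le_of_sum_le hsum⟩

end FourierApproximation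

section SobolevNorms

open scoped ComplexConjugate

lemma circleCoeff_ofReal_neg (f : ℝ → ℝ) (k : ℤ) :
    circleCoeff (fun s => (f s : ℂ)) (-k) = conj (circleCoeff (fun s => (f s : ℂ)) k) := by
  simp only [circleCoeff_eq_integral, map_mul, Complex.conj_ofReal,
    intervalIntegral.integral_of_le (neg_le_self pi_nonneg), ← integral_conj, conj_expMode]

lemma circleCoeff_eq_re_add_im {f : ℝ → ℂ} (hf : IntervalIntegrable f volume (-π) π) (k : ℤ) :
    circleCoeff f k = circleCoeff (fun s => ((f s).re : ℂ)) k
      + Complex.I * circleCoeff (fun s => ((f s).im : ℂ)) k := by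
  have hre : IntervalIntegrable (fun s => ((f s).re : ℂ)) volume (-π) π :=
    ⟨hf.1.re.ofReal, hf.2.re.ofReal⟩
  have him : IntervalIntegrable (fun s => ((f s).im : ℂ)) volume (-π) π :=
    ⟨hf.1.im.ofReal, hf.2.im.ofReal⟩
  have hexp : ContinuousOn (expMode (-k)) (Set.uIcc (-π) π) := (continuous_expMode _).continuousOn
  have hsplit (s : ℝ) : f s * expMode (-k) s
      = (f s).re * expMode (-k) s + Complex.I * ((f s).im * expMode (-k) s) := by
    conv_lhs => rw [← Complex.re_add_im (f s)]
    ring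
  rw [circleCoeff_eq_integral, circleCoeff_eq_integral, circleCoeff_eq_integral, mul_left_comm,
    ← mul_add, ← intervalIntegral.integral_const_mul Complex.I, ← intervalIntegral.integral_add
      (hre.mul_continuousOn hexp) ((him.mul_continuousOn hexp).const_mul _)]
  simp only [hsplit]

lemma norm_circleCoeff_re_sq_add_norm_circleCoeff_im_sq {f : ℝ → ℂ}
    (hf : IntervalIntegrable f volume (-π) π) (k : ℤ) :
    ‖circleCoeff (fun s => ((f s).re : ℂ)) k‖ ^ 2 + ‖circleCoeff (fun s => ((f s).im : ℂ)) k‖ ^ 2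
      = (‖circleCoeff f k‖ ^ 2 + ‖circleCoeff f (-k)‖ ^ 2) / 2 := by
  rw [circleCoeff_eq_re_add_im hf k, circleCoeff_eq_re_add_im hf (-k), circleCoeff_ofReal_neg,
    circleCoeff_ofReal_neg]
  set x := circleCoeff (fun s => ((f s).re : ℂ)) k
  set y := circleCoeff (fun s => ((f s).im : ℂ)) k
  have hconj : ‖conj x + Complex.I * conj y‖ = ‖x - Complex.I * y‖ := by
    rw [← RCLike.norm_conj (x - _)]
    simp
  have hlaw := parallelogram_law_with_norm ℝ x (Complex.I * y)
  rw [norm_mul, Complex.norm_I, one_mul] at hlaw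
  rw [hconj]
  linarith

/-- The isometric identification `(a, b) ↦ a + ib` of the plane with `ℂ`. -/
def planeToComplex : E2 ≃ₗᵢ[ℝ] ℂ := Complex.orthonormalBasisOneI.repr.symm

lemma planeToComplex_apply (x : E2) : planeToComplex x = x 0 + x 1 * Complex.I := by
  rw [planeToComplex, ← Complex.orthonormalBasisOneI.sum_repr_symm, Fin.sum_univ_two]
  simp

lemma coefSq_eq {g : ℝ → E2}
    (hg : IntervalIntegrable (fun s => planeToComplex (g s)) volume (-π) π) (k : ℤ) :
    coefSq g k = (2 * π) ^ 2 * ((‖circleCoeff (fun s => planeToComplex (g s)) k‖ ^ 2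
      + ‖circleCoeff (fun s => planeToComplex (g s)) (-k)‖ ^ 2) / 2) := by
  have hexp : ∀ s : ℝ, Complex.exp (-Complex.I * k * s) = expMode (-k) s := fun s => by
    rw [expMode, Int.cast_neg, mul_neg, neg_mul]
  have hpi : (2 * π) ≠ 0 := two_pi_pos.ne'
  rw [← norm_circleCoeff_re_sq_add_norm_circleCoeff_im_sq hg]
  simp only [coefSq, hexp, Complex.normSq_eq_norm_sq, Fin.sum_univ_two, circleCoeff_eq_integral,
    norm_mul, mul_pow, planeToComplex_apply, Complex.norm_real, Real.norm_eq_abs, sq_abs]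
  simp only [Complex.add_re, Complex.add_im, Complex.mul_re, Complex.mul_im, Complex.ofReal_re,
    Complex.ofReal_im, Complex.I_re, Complex.I_im, mul_zero, mul_one, sub_self, add_zero, zero_add]
  field_simp

lemma coefSq_nonneg (g : ℝ → E2) (k : ℤ) : 0 ≤ coefSq g k :=
  Finset.sum_nonneg fun _ _ => Complex.normSq_nonneg _

lemma sobSummand_nonneg (σ : ℝ) (g : ℝ → E2) (k : ℤ) : 0 ≤ sobSummand σ g k := by
  have := coefSq_nonneg g k
  unfold sobSummand
  split_ifs <;> positivity

lemma summable_sobSummand_of_le {σ τ : ℝ} {g : ℝ → E2} (hστ : σ ≤ τ)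
    (h : Summable (sobSummand τ g)) : Summable (sobSummand σ g) := by
  refine .of_nonneg_of_le (sobSummand_nonneg σ g) (fun k => ?_) h
  rw [sobSummand, sobSummand]
  split_ifs with hk
  · exact le_rfl
  · have hcoef := coefSq_nonneg g k
    have hk₁ : (1 : ℝ) ≤ |(k : ℝ)| := mod_cast Int.one_le_abs hk
    gcongr

section

variable {σ : ℝ} {g : ℝ → E2}

lemma sobSummand_eq (hσ : σ ≠ 0)
    (hg : IntervalIntegrable (fun s => planeToComplex (g s)) volume (-π) π) (k : ℤ) :
    sobSummand σ g k = (2 * π) ^ 2 / 2 *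
      (|(k : ℝ)| ^ (2 * σ) * ‖circleCoeff (fun s => planeToComplex (g s)) k‖ ^ 2
        + |((-k : ℤ) : ℝ)| ^ (2 * σ) * ‖circleCoeff (fun s => planeToComplex (g s)) (-k)‖ ^ 2) := by
  rw [sobSummand]
  split_ifs with hk
  · simp [hk, zero_rpow, hσ]
  · rw [coefSq_eq hg, Int.cast_neg, abs_neg]
    ring

lemma summable_sobSummand_iff (hσ : σ ≠ 0)
    (hg : IntervalIntegrable (fun s => planeToComplex (g s)) volume (-π) π) :
    Summable (sobSummand σ g) ↔ Summable fun k : ℤ =>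
      |(k : ℝ)| ^ (2 * σ) * ‖circleCoeff (fun s => planeToComplex (g s)) k‖ ^ 2 := by
  set e : ℤ → ℝ := fun k =>
    |(k : ℝ)| ^ (2 * σ) * ‖circleCoeff (fun s => planeToComplex (g s)) k‖ ^ 2
  have he : ∀ k, 0 ≤ e k := fun k => by positivity
  have heq : sobSummand σ g = fun k => (2 * π) ^ 2 / 2 * (e k + e (-k)) :=
    funext (sobSummand_eq hσ hg)
  rw [heq, summable_mul_left_iff (by positivity)]
  exact ⟨.of_nonneg_of_le he fun k => le_add_of_nonneg_right (he (-k)),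
    fun h => h.add (h.comp_injective neg_injective)⟩

lemma tsum_sobSummand (hσ : σ ≠ 0)
    (hg : IntervalIntegrable (fun s => planeToComplex (g s)) volume (-π) π)
    (hs : Summable (sobSummand σ g)) :
    ∑' k, sobSummand σ g k = (2 * π) ^ 2 * ∑' k : ℤ,
      |(k : ℝ)| ^ (2 * σ) * ‖circleCoeff (fun s => planeToComplex (g s)) k‖ ^ 2 := by
  rw [summable_sobSummand_iff hσ hg] at hs
  set e : ℤ → ℝ := fun k =>
    |(k : ℝ)| ^ (2 * σ) * ‖circleCoeff (fun s => planeToComplex (g s)) k‖ ^ 2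
  have hs_neg : Summable fun k => e (-k) := hs.comp_injective neg_injective
  have htsum_neg : ∑' k, e (-k) = ∑' k, e k := (Equiv.neg ℤ).tsum_eq e
  calc ∑' k, sobSummand σ g k = ∑' k, (2 * π) ^ 2 / 2 * (e k + e (-k)) :=
        tsum_congr (sobSummand_eq hσ hg)
    _ = (2 * π) ^ 2 / 2 * (∑' k, e k + ∑' k, e k) := by
        rw [tsum_mul_left, hs.tsum_add hs_neg, htsum_neg]
    _ = (2 * π) ^ 2 * ∑' k, e k := by ring

lemma sobNorm_sq (hσ : σ ≠ 0)
    (hg : IntervalIntegrable (fun s => planeToComplex (g s)) volume (-π) π)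
    (hs : Summable (sobSummand σ g)) :
    sobNorm σ g ^ 2 = (2 * π) ^ 2 * ∑' k : ℤ,
      |(k : ℝ)| ^ (2 * σ) * ‖circleCoeff (fun s => planeToComplex (g s)) k‖ ^ 2 := by
  rw [sobNorm, Real.sq_sqrt (tsum_nonneg (sobSummand_nonneg σ g)), tsum_sobSummand hσ hg hs]

end

end SobolevNorms

section ComplexNotation

lemma neg_sq_div_add_inner_sq_div_eq_re (l v : ℂ) :
    -‖v‖ ^ 2 / ‖l‖ ^ 2 + 2 * ⟪l, v⟫ ^ 2 / ‖l‖ ^ 4 = ((v / l) ^ 2).re := by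
  rcases eq_or_ne l 0 with rfl | hl
  · simp
  have hn : Complex.normSq l ≠ 0 := (Complex.normSq_pos.2 hl).ne'
  have hdiv : v / l = (Complex.normSq l)⁻¹ * (starRingEnd ℂ l * v) := by
    rw [div_eq_mul_inv, Complex.inv_def]
    ring
  have hinner : ⟪l, v⟫ = (starRingEnd ℂ l * v).re := by rw [Complex.inner, mul_comm]
  have hnorm : ‖l‖ ^ 4 = Complex.normSq l ^ 2 := by
    rw [Complex.normSq_eq_norm_sq]
    ring
  have hre_sq (w : ℂ) : (w ^ 2).re = 2 * w.re ^ 2 - Complex.normSq w := by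
    rw [sq, Complex.mul_re, Complex.normSq_apply]
    ring
  rw [hdiv, hinner, hnorm, ← Complex.normSq_eq_norm_sq, ← Complex.normSq_eq_norm_sq, hre_sq,
    Complex.re_ofReal_mul, Complex.normSq_mul, Complex.normSq_mul,
    Complex.normSq_conj, Complex.normSq_ofReal]
  field_simp
  ring

lemma planeToComplex_gY (Y Y' : ℝ → E2) (s : ℝ) :
    planeToComplex (gY Y Y' s) = ((4 * π)⁻¹ : ℝ) *
      contourRemainder (planeToComplex ∘ Y) (planeToComplex ∘ Y') s := by
  rw [gY, map_smul, Complex.real_smul, contourRemainder,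
    intervalIntegral.integral_of_le (neg_le_self pi_nonneg),
    intervalIntegral.integral_of_le (neg_le_self pi_nonneg),
    ← planeToComplex.coe_toContinuousLinearEquiv, ← ContinuousLinearEquiv.integral_comp_comm]
  congr 2
  funext t
  have hl : planeToComplex (t⁻¹ • (Y (s + t) - Y s))
      = (t : ℂ)⁻¹ * (planeToComplex (Y (s + t)) - planeToComplex (Y s)) := by
    rw [map_smul, map_sub, Complex.real_smul, Complex.ofReal_inv]
  rw [planeToComplex.coe_toContinuousLinearEquiv, map_smul, Complex.real_smul, contourIntegrand,
    ← planeToComplex.norm_map (Y' _), ← planeToComplex.norm_map (t⁻¹ • _),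
    ← planeToComplex.inner_map_map, neg_sq_div_add_inner_sq_div_eq_re, hl]
  rcases eq_or_ne t 0 with rfl | ht
  · simp
  · rw [kernelGap]
    have ht_complex : (t : ℂ) ≠ 0 := Complex.ofReal_ne_zero.2 ht
    simp only [Function.comp_apply]
    generalize planeToComplex (Y (s + t)) - planeToComplex (Y s) = d
    generalize ((planeToComplex (Y' (s + t)) / ((t : ℂ)⁻¹ * d)) ^ 2).re = r
    push_cast
    field_simp

lemma circleCoeff_const_mul (a : ℂ) (f : ℝ → ℂ) (k : ℤ) :
    circleCoeff (fun s => a * f s) k = a * circleCoeff f k := by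
  simp only [circleCoeff_eq_integral, mul_assoc, intervalIntegral.integral_const_mul]
  ring

section

variable {Y Y' : ℝ → E2} {σ : ℝ}

lemma intervalIntegrable_planeToComplex_gY
    (hR : IntervalIntegrable (contourRemainder (planeToComplex ∘ Y) (planeToComplex ∘ Y'))
      volume (-π) π) :
    IntervalIntegrable (fun s => planeToComplex (gY Y Y' s)) volume (-π) π := by
  simpa only [planeToComplex_gY] using hR.const_mul _

lemma norm_circleCoeff_gY_sq (k : ℤ) :
    ‖circleCoeff (fun s => planeToComplex (gY Y Y' s)) k‖ ^ 2 = ((4 * π) ^ 2)⁻¹ *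
      ‖circleCoeff (contourRemainder (planeToComplex ∘ Y) (planeToComplex ∘ Y')) k‖ ^ 2 := by
  simp only [planeToComplex_gY, circleCoeff_const_mul, norm_mul, Complex.norm_real,
    Real.norm_eq_abs, mul_pow, sq_abs, inv_pow]

lemma summable_sobSummand_gY (hσ : σ ≠ 0)
    (hR : IntervalIntegrable (contourRemainder (planeToComplex ∘ Y) (planeToComplex ∘ Y'))
      volume (-π) π)
    (hs : Summable fun k : ℤ => |(k : ℝ)| ^ (2 * σ) *
      ‖circleCoeff (contourRemainder (planeToComplex ∘ Y) (planeToComplex ∘ Y')) k‖ ^ 2) :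
    Summable (sobSummand σ (gY Y Y')) := by
  rw [summable_sobSummand_iff hσ (intervalIntegrable_planeToComplex_gY hR)]
  simpa only [norm_circleCoeff_gY_sq, mul_left_comm] using hs.mul_left ((4 * π) ^ 2)⁻¹

lemma sobNorm_gY_sq (hσ : σ ≠ 0)
    (hR : IntervalIntegrable (contourRemainder (planeToComplex ∘ Y) (planeToComplex ∘ Y'))
      volume (-π) π)
    (hs : Summable (sobSummand σ (gY Y Y'))) :
    sobNorm σ (gY Y Y') ^ 2 = (∑' k : ℤ, |(k : ℝ)| ^ (2 * σ) *
      ‖circleCoeff (contourRemainder (planeToComplex ∘ Y) (planeToComplex ∘ Y')) k‖ ^ 2) / 4 := by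
  rw [sobNorm_sq hσ (intervalIntegrable_planeToComplex_gY hR) hs]
  simp only [norm_circleCoeff_gY_sq, mul_left_comm _ ((4 * π) ^ 2)⁻¹, tsum_mul_left]
  field_simp
  norm_num

end

end ComplexNotation

theorem statement17_general : ∃ C : ℝ, 0 < C ∧ ∀ (Y Y' : ℝ → E2) (lam : ℝ), 0 < lam →
    Function.Periodic Y (2 * π) → (∀ s, HasDerivAt Y (Y' s) s) → WellStretched Y lam →
    Summable (sobSummand (9 / 4) Y) → Summable (sobSummand 2 (gY Y Y')) ∧
      sobNorm 2 (gY Y Y') ≤ C / lam ^ 3 * sobNorm (9 / 4) Y ^ 4 := by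
  obtain ⟨C, hC, hmain⟩ := exists_tsum_rpow_mul_norm_circleCoeff_contourRemainder_sq_le
  refine ⟨√C / (2 * (2 * π) ^ 4), by positivity, fun Y Y' lam hlam hper hd hY hs => ?_⟩
  have hdℂ : ∀ s, HasDerivAt (planeToComplex ∘ Y) ((planeToComplex ∘ Y') s) s := fun s =>
    planeToComplex.toContinuousLinearEquiv.hasFDerivAt.comp_hasDerivAt s (hd s)
  have hYℂ : WellStretched (planeToComplex ∘ Y) lam := fun s₁ s₂ h => by
    simpa only [Function.comp_apply, ← map_sub, planeToComplex.norm_map] using hY s₁ s₂ h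
  have hint : IntervalIntegrable (planeToComplex ∘ Y) volume (-π) π :=
    (continuous_iff_continuousAt.2 fun s => (hdℂ s).continuousAt).intervalIntegrable _ _
  have henergy := (summable_sobSummand_iff (by norm_num) hint).1 hs
  have hloop := HolderLoop.of_summable_energy (hper.comp _) hdℂ hlam hYℂ henergy
  obtain ⟨hsumR, hle⟩ := hmain _ _ lam _ hloop henergy
  have hR := hloop.intervalIntegrable_contourRemainder
  have hsum_gY := summable_sobSummand_gY two_ne_zero hR hsumR
  refine ⟨hsum_gY, (pow_le_pow_iff_left₀ (sqrt_nonneg _) (by positivity) two_ne_zero).1 ?_⟩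
  calc sobNorm 2 (gY Y Y') ^ 2 ≤ C * ((∑' k : ℤ, |(k : ℝ)| ^ (2 * (9 / 4) : ℝ) *
          ‖circleCoeff (planeToComplex ∘ Y) k‖ ^ 2) ^ 4 / lam ^ 6) / 4 := by
        rw [sobNorm_gY_sq two_ne_zero hR hsum_gY]
        gcongr
    _ = (√C / (2 * (2 * π) ^ 4) / lam ^ 3 * (sobNorm (9 / 4) Y ^ 2) ^ 2) ^ 2 := by
        rw [sobNorm_sq (by norm_num) hint hs, mul_pow, div_pow, div_pow, Real.sq_sqrt hC.le]
        simp only [Function.comp_def]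
        field_simp
        norm_num
    _ = (√C / (2 * (2 * π) ^ 4) / lam ^ 3 * sobNorm (9 / 4) Y ^ 4) ^ 2 := by rw [← pow_mul]

/-- The improved `Ḣ²` a priori estimate for the nonlinearity `g_Y`. -/
theorem statement17 (θ : ℝ) (hθ1 : 1 / 4 ≤ θ) (hθ2 : θ < 1) :
    ∃ C : ℝ, 0 < C ∧
      ∀ (Y Y' Y'' : ℝ → E2) (lam : ℝ),
        0 < lam →
        Function.Periodic Y (2 * π) →
        (∀ s, HasDerivAt Y (Y' s) s) →
        Continuous Y' →
        LocallyIntegrable Y'' volume →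
        (∀ a b : ℝ, a ≤ b → Y' b - Y' a = ∫ u in a..b, Y'' u) →
        -- well-stretched condition with constant `lam`
        (∀ s₁ s₂ : ℝ, |s₁ - s₂| ≤ π → lam * |s₁ - s₂| ≤ ‖Y s₁ - Y s₂‖) →
        -- `‖Y‖_{Ḣ^{2+θ}(𝕋)} < ∞`
        Summable (sobSummand (2 + θ) Y) →
        Summable (sobSummand 2 (gY Y Y')) ∧
        sobNorm 2 (gY Y Y') ≤ C / lam ^ 3 * sobNorm ((9 : ℝ) / 4) Y ^ 4 := by
  obtain ⟨C, hC, hgeneral⟩ := statement17_general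
  exact ⟨C, hC, fun Y Y' _ lam hlam hper hd _ _ _ hY hs =>
    hgeneral Y Y' lam hlam hper hd hY (summable_sobSummand_of_le (by linarith) hs)⟩
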